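/- arXiv:2305.19279 — 9 statements merged into one kernel-verified Lean document; each statement's English description precedes it below -/
import Mathlib

section
/- Let v : ℝⁿ → ℝⁿ be a continuous function and let r > 0 be such that v(u)·u ≥ 0 for every u ∈ ℝⁿ with ‖u‖ = r (Euclidean norm and dot product). Then there exists a point u* ∈ ℝⁿ with ‖u*‖ ≤ r such that v(u*) = 0. -/
open scoped RealInnerProductSpace

lemma zvf_image {E : Type*} [NormedAddCommGroup E] [CompleteSpace E] (G : E → E) (L : NNReal)
    (hL : L < 1) (hG : LipschitzWith L G) (r : ℝ) (h0 : ∀ x, r ≤ ‖x‖ → G x = 0) :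
    Function.Injective (fun x => x + G x) ∧
      (fun x => x + G x) '' Metric.ball 0 r = Metric.ball 0 r := by
  have inj : Function.Injective (fun x => x + G x) := by
    intro x y hxy
    have h1 : x - y = G y - G x := by
      have : x + G x = y + G y := hxy
      rw [sub_eq_sub_iff_add_eq_add, this, add_comm]
    have h2 := hG.dist_le_mul y x
    rw [dist_eq_norm, ← h1, dist_comm y x, dist_eq_norm] at h2
    have hL' : (L : ℝ) < 1 := by exact_mod_cast hL
    have : ‖x - y‖ = 0 := by nlinarith [norm_nonneg (x - y)]
    exact sub_eq_zero.1 (norm_eq_zero.1 this)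
  refine ⟨inj, ?_⟩
  ext y
  simp only [Set.mem_image, mem_ball_zero_iff]
  constructor
  · rintro ⟨x, hx, rfl⟩
    by_contra hy
    push Not at hy
    have : x + G x = x := inj (by simp [h0 _ hy])
    rw [this] at hy
    linarith
  · intro hy
    have hc : ContractingWith L (fun x => y - G x) := by
      refine ⟨hL, LipschitzWith.of_dist_le_mul fun a b => ?_⟩
      rw [dist_sub_left]
      exact hG.dist_le_mul a b
    let x := hc.fixedPoint
    have hx : y - G x = x := hc.fixedPoint_isFixedPt
    have hx' : x + G x = y := (sub_eq_iff_eq_add.1 hx).symm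
    refine ⟨x, ?_, hx'⟩
    by_contra hxr
    push Not at hxr
    rw [h0 x hxr, add_zero] at hx'
    rw [hx'] at hxr
    linarith

lemma zvf_ext {E : Type*} [NormedAddCommGroup E] [NormedSpace ℝ E] (g : E → E) (K : NNReal)
    (r : ℝ) (hr : 0 < r)
    (hg : LipschitzOnWith K g (Metric.closedBall 0 r)) (h0 : ∀ x, ‖x‖ = r → g x = 0) :
    ∃ G : E → E, LipschitzWith (K * 2) G ∧ (∀ x, ‖x‖ ≤ r → G x = g x) ∧
      ∀ x, r ≤ ‖x‖ → G x = 0 := by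
  let P : E → E := fun x => (r / max r ‖x‖) • x
  have hm : ∀ x : E, 0 < max r ‖x‖ := fun x => lt_max_of_lt_left hr
  have hP : LipschitzWith 2 P := by
    refine LipschitzWith.of_dist_le_mul fun x y => ?_
    have e : P x - P y = (r / max r ‖x‖) • (x - y) +
        (r / max r ‖x‖ - r / max r ‖y‖) • y := by
      simp only [P]; module
    rw [dist_eq_norm, dist_eq_norm, e]
    refine (norm_add_le _ _).trans ?_
    rw [norm_smul, norm_smul]
    have c1 : r / max r ‖x‖ ≤ 1 := (div_le_one (hm x)).2 (le_max_left _ _)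
    have c0 : 0 ≤ r / max r ‖x‖ := (div_pos hr (hm x)).le
    have e2 : (r / max r ‖x‖ - r / max r ‖y‖) =
        (r / max r ‖x‖) * ((max r ‖y‖ - max r ‖x‖) / max r ‖y‖) := by
      have := (hm x).ne'; have := (hm y).ne'
      field_simp
    have h3 : |max r ‖y‖ - max r ‖x‖| ≤ ‖x - y‖ := by
      rw [abs_sub_comm]
      refine (abs_max_sub_max_le_max r ‖x‖ r ‖y‖).trans ?_
      simp [abs_norm_sub_norm_le]
    have h4 : ‖r / max r ‖x‖ - r / max r ‖y‖‖ * ‖y‖ ≤ ‖x - y‖ := by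
      rw [e2, norm_mul, Real.norm_of_nonneg c0, Real.norm_eq_abs, abs_div, abs_of_pos (hm y)]
      have : |max r ‖y‖ - max r ‖x‖| / max r ‖y‖ * ‖y‖ ≤ |max r ‖y‖ - max r ‖x‖| := by
        rw [div_mul_eq_mul_div, div_le_iff₀ (hm y)]
        exact mul_le_mul_of_nonneg_left (le_max_right _ _) (abs_nonneg _)
      rw [mul_assoc]
      refine (mul_le_of_le_one_left (by positivity) c1).trans (this.trans h3)
    rw [Real.norm_of_nonneg c0]
    have := mul_le_of_le_one_left (norm_nonneg (x - y)) c1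
    push_cast
    linarith
  have hPr : ∀ x, r ≤ ‖x‖ → ‖P x‖ = r := by
    intro x hx
    simp only [P, max_eq_right hx, norm_smul]
    have : 0 < ‖x‖ := hr.trans_le hx
    rw [Real.norm_of_nonneg (by positivity)]
    field_simp
  have hPi : ∀ x, ‖x‖ ≤ r → P x = x := by
    intro x hx
    simp only [P, max_eq_left hx, div_self hr.ne', one_smul]
  refine ⟨g ∘ P, ?_, fun x hx => by simp [hPi x hx], fun x hx => h0 _ (hPr x hx)⟩
  rw [← lipschitzOnWith_univ]
  refine hg.comp hP.lipschitzOnWith fun x _ => ?_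
  rw [mem_closedBall_zero_iff]
  rcases le_total ‖x‖ r with h | h
  · rwa [hPi x h]
  · exact (hPr x h).le

open Polynomial in
lemma zvf_det {E : Type*} [NormedAddCommGroup E] [NormedSpace ℝ E] [FiniteDimensional ℝ E]
    (t : ℕ → ℝ) (ht : Function.Injective t) :
    ∃ c : ℕ → ℝ, (∑ i ∈ Finset.range (Module.finrank ℝ E + 1), c i) = 1 ∧
      ∀ A : E →L[ℝ] E, (1 + A).det =
        ∑ i ∈ Finset.range (Module.finrank ℝ E + 1), c i * (1 + t i • A).det := by
  set N := Module.finrank ℝ E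
  let s := Finset.range (N + 1)
  refine ⟨fun i => (Lagrange.basis s t i).eval 1, ?_, fun A => ?_⟩
  · rw [← eval_finsetSum, Lagrange.sum_basis ht.injOn ⟨0, by simp⟩, eval_one]
  · let b := Module.finBasis ℝ E
    let M := LinearMap.toMatrix b b (A : E →ₗ[ℝ] E)
    let p : ℝ[X] := Matrix.det ((X : ℝ[X]) • M.map C + (1 : Matrix _ _ ℝ).map C)
    have hp : ∀ a : ℝ, p.eval a = (1 + a • A).det := by
      intro a
      have : (1 + a • A).det = Matrix.det (1 + a • M) := by
        rw [ContinuousLinearMap.det, ← LinearMap.det_toMatrix b]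
        congr 1
        simp [M, LinearMap.toMatrix_one]
      rw [this, ← Polynomial.coe_evalRingHom, RingHom.map_det]
      congr 1
      ext i j
      simp [Matrix.one_apply]
      split_ifs <;> simp <;> ring
    have hd : p.degree < s.card := by
      refine (degree_le_natDegree).trans_lt ?_
      have := Polynomial.natDegree_det_X_add_C_le M 1
      simp only [Fintype.card_fin] at this
      simp only [s, Finset.card_range]
      exact_mod_cast Nat.lt_succ_of_le this
    have h1 := congrArg (eval 1) (Lagrange.eq_interpolate (v := t) ht.injOn hd)
    rw [Lagrange.interpolate_apply, eval_finsetSum, hp, one_smul] at h1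
    rw [h1]
    refine Finset.sum_congr rfl fun i _ => ?_
    rw [eval_mul, eval_C, hp, mul_comm]

open MeasureTheory in
lemma zvf_noretract {E : Type*} [NormedAddCommGroup E] [InnerProductSpace ℝ E]
    [FiniteDimensional ℝ E] [MeasurableSpace E] [BorelSpace E]
    (F : E → E) (r : ℝ) (hr : 0 < r)
    (hF : ∀ x, ‖x‖ ≤ r → ContDiffAt ℝ 1 F x) (hn : ∀ x, ‖x‖ ≤ r → ‖F x‖ = r)
    (hs : ∀ x, ‖x‖ = r → F x = x) : False := by
  let g : E → E := fun x => F x - x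
  let A : E → E →L[ℝ] E := fun x => fderiv ℝ g x
  have hg : ∀ x, ‖x‖ ≤ r → ContDiffAt ℝ 1 g x := fun x hx => (hF x hx).sub contDiffAt_id
  have hgd : ∀ x, ‖x‖ ≤ r → HasFDerivAt g (A x) x := fun x hx =>
    ((hg x hx).differentiableAt (by norm_num)).hasFDerivAt
  have hA : ContinuousOn A (Metric.closedBall 0 r) := by
    intro x hx
    have := ((hg x (by simpa using hx)).fderiv_right (m := 0) (by norm_num)).continuousAt
    exact this.continuousWithinAt
  obtain ⟨C, hC⟩ := (isCompact_closedBall (0 : E) r).exists_bound_of_continuousOn hA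
  have hC0 : 0 ≤ C := (norm_nonneg _).trans (hC 0 (by simp [hr.le]))
  lift C to NNReal using hC0
  have hLip : LipschitzOnWith C g (Metric.closedBall 0 r) := by
    refine (convex_closedBall (0 : E) r).lipschitzOnWith_of_nnnorm_fderiv_le (𝕜 := ℝ)
      (fun x hx => (hgd x (by simpa using hx)).differentiableAt) fun x hx => ?_
    exact_mod_cast hC x hx
  obtain ⟨G, hG, hGg, hG0⟩ := zvf_ext g C r hr hLip (fun x hx => by simp [g, hs x hx])
  -- positivity of the determinant near the identity
  obtain ⟨ε, hε, hdet⟩ : ∃ ε > 0, ∀ M : E →L[ℝ] E, ‖M‖ < ε → 0 < (1 + M).det := by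
    have hc : Continuous fun M : E →L[ℝ] E => (1 + M).det :=
      ContinuousLinearMap.continuous_det.comp (continuous_const.add continuous_id)
    have h1 : (0 : ℝ) < (1 + (0 : E →L[ℝ] E)).det := by
      rw [add_zero]
      have : (1 : E →L[ℝ] E).det = 1 := by
        simp [ContinuousLinearMap.det]
      rw [this]; norm_num
    have := (hc.tendsto 0).eventually (lt_mem_nhds h1)
    obtain ⟨ε, hε, h⟩ := Metric.eventually_nhds_iff.1 this
    exact ⟨ε, hε, fun M hM => h (by simpa using hM)⟩
  obtain ⟨δ, hδ, hδ1, hδ2⟩ : ∃ δ : ℝ, 0 < δ ∧ δ * (C * 2) < 1 ∧ δ * C < ε := by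
    have hC0 : (0 : ℝ) ≤ C := C.2
    refine ⟨min (1 / (C * 2 + 1)) (ε / (C + 1)), by positivity, ?_, ?_⟩
    · calc _ ≤ 1 / ((C : ℝ) * 2 + 1) * (C * 2) := by gcongr; exact min_le_left _ _
        _ < 1 := by rw [div_mul_eq_mul_div, div_lt_one (by positivity)]; linarith
    · calc _ ≤ ε / ((C : ℝ) + 1) * C := by gcongr; exact min_le_right _ _
        _ < ε := by rw [div_mul_eq_mul_div, div_lt_iff₀ (by positivity)]; nlinarith
  let B : Set E := Metric.ball 0 r
  have hB : ∀ x ∈ B, ‖x‖ ≤ r := fun x hx => by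
    have : ‖x‖ < r := by simpa [B] using hx
    exact this.le
  have key : ∀ t : ℝ, 0 < t → t ≤ δ →
      ∫ x in B, (1 + t • A x).det = (volume : Measure E).real B := by
    intro t ht htδ
    have hLt : LipschitzWith (t.toNNReal * (C * 2)) (fun x => t • G x) := by
      refine LipschitzWith.of_dist_le_mul fun x y => ?_
      rw [dist_smul₀, NNReal.coe_mul, Real.coe_toNNReal _ ht.le, mul_assoc,
        Real.norm_of_nonneg ht.le]
      exact mul_le_mul_of_nonneg_left (hG.dist_le_mul x y) ht.le
    have hlt : t.toNNReal * (C * 2) < 1 := by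
      rw [← NNReal.coe_lt_coe]
      push_cast
      rw [Real.coe_toNNReal _ ht.le]
      have : t * ((C : ℝ) * 2) ≤ δ * (C * 2) := by gcongr
      linarith
    obtain ⟨inj, im⟩ := zvf_image (fun x => t • G x) _ hlt hLt r
      (fun x hx => by simp [hG0 x hx])
    have heq : Set.EqOn (fun x => x + t • G x) (fun x => x + t • g x) B := fun x hx => by
      simp [hGg x (hB x hx)]
    have inj' : Set.InjOn (fun x => x + t • g x) B := (inj.injOn (s := B)).congr heq
    have im' : (fun x => x + t • g x) '' B = B := by rw [← heq.image_eq]; exact im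
    have hd : ∀ x ∈ B, HasFDerivWithinAt (fun x => x + t • g x) (1 + t • A x) B x :=
      fun x hx => ((hasFDerivAt_id x).add ((hgd x (hB x hx)).const_smul t)).hasFDerivWithinAt
    have h := integral_image_eq_integral_abs_det_fderiv_smul volume
      (Metric.isOpen_ball.measurableSet : MeasurableSet B) hd inj' (fun _ => (1 : ℝ))
    rw [im'] at h
    simp only [integral_const, smul_eq_mul, mul_one, measureReal_restrict_apply_univ] at h
    rw [h]
    refine setIntegral_congr_fun Metric.isOpen_ball.measurableSet fun x hx => ?_
    refine (abs_of_pos (hdet _ ?_)).symm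
    rw [norm_smul, Real.norm_of_nonneg ht.le]
    have : ‖A x‖ ≤ C := hC x (Metric.ball_subset_closedBall hx)
    calc t * ‖A x‖ ≤ δ * C := by gcongr
      _ < ε := hδ2
  have hint : ∀ t : ℝ, IntegrableOn (fun x => (1 + t • A x).det) B := by
    intro t
    refine IntegrableOn.mono_set ?_ Metric.ball_subset_closedBall
    refine ContinuousOn.integrableOn_compact (isCompact_closedBall _ _) ?_
    exact ContinuousLinearMap.continuous_det.comp_continuousOn
      (continuousOn_const.add (hA.const_smul t))
  let t : ℕ → ℝ := fun i => δ / (i + 1)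
  have htinj : Function.Injective t := by
    intro i j hij
    have h1 : δ / ((i : ℝ) + 1) = δ / ((j : ℝ) + 1) := hij
    field_simp at h1
    have : (i : ℝ) = j := by linarith
    exact_mod_cast this
  obtain ⟨c, hc1, hc⟩ := zvf_det (E := E) t htinj
  have h1 : ∫ x in B, (1 + A x).det = (volume : Measure E).real B := by
    rw [integral_congr_ae (Filter.Eventually.of_forall fun x => hc (A x))]
    rw [integral_finsetSum _ fun i _ => (hint (t i)).const_mul (c i)]
    simp_rw [integral_const_mul]
    rw [Finset.sum_congr rfl fun i _ => by
      rw [key (t i) (by simp only [t]; positivity)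
        (div_le_self hδ.le (by linarith [(Nat.cast_nonneg i : (0 : ℝ) ≤ i)]))],
      ← Finset.sum_mul, hc1, one_mul]
  have h2 : ∫ x in B, (1 + A x).det = 0 := by
    rw [setIntegral_congr_fun (g := fun _ => (0 : ℝ)) Metric.isOpen_ball.measurableSet]
    · simp
    intro x hx
    have hx' := hB x hx
    have hFd : HasFDerivAt F (1 + A x) x := by
      have := (hasFDerivAt_id x).add (hgd x hx')
      refine this.congr_of_eventuallyEq (Filter.Eventually.of_forall fun y => ?_)
      simp [g]
    have hsq : HasFDerivAt (fun y => ⟪F y, F y⟫) (0 : E →L[ℝ] ℝ) x := by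
      refine (hasFDerivAt_const (r * r) x).congr_of_eventuallyEq ?_
      filter_upwards [Metric.isOpen_ball.mem_nhds hx] with y hy
      rw [real_inner_self_eq_norm_mul_norm, hn y (hB y hy)]
    have hu := hsq.unique (hFd.inner ℝ hFd)
    by_contra hne
    have hne' : LinearMap.det ((1 + A x : E →L[ℝ] E) : E →ₗ[ℝ] E) ≠ 0 := hne
    have hsurj : Function.Surjective (1 + A x : E →L[ℝ] E) := by
      have := LinearMap.range_eq_top.1
        (((LinearMap.isUnit_iff_range_eq_top _).1
          ((LinearMap.isUnit_iff_isUnit_det _).2 (isUnit_iff_ne_zero.2 hne'))))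
      exact this
    obtain ⟨w, hw⟩ := hsurj (F x)
    have := DFunLike.congr_fun hu w
    simp only [zero_apply, ContinuousLinearMap.comp_apply,
      ContinuousLinearMap.prod_apply, fderivInnerCLM_apply, hw] at this
    rw [real_inner_self_eq_norm_mul_norm, hn x hx'] at this
    nlinarith
  rw [h1] at h2
  have : 0 < (volume : Measure E).real B :=
    ENNReal.toReal_pos (Metric.measure_ball_pos _ _ hr).ne' measure_ball_lt_top.ne
  linarith

lemma zvf_smooth {E : Type*} [NormedAddCommGroup E] [InnerProductSpace ℝ E]
    [FiniteDimensional ℝ E] [MeasurableSpace E] [BorelSpace E]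
    (w : E → E) (r : ℝ) (hr : 0 < r) (hw : ContDiff ℝ 1 w)
    (h0 : ∀ x, ‖x‖ ≤ r → w x ≠ 0) (hs : ∀ x, ‖x‖ = r → 0 < ⟪w x, x⟫) : False := by
  let D : E → ℝ := fun x => ⟪w x, x⟫ ^ 2 + ⟪w x, w x⟫ * (r ^ 2 - ⟪x, x⟫)
  have hww : ∀ x, ‖x‖ ≤ r → 0 < ⟪w x, w x⟫ := fun x hx => real_inner_self_pos.2 (h0 x hx)
  have hD : ∀ x, ‖x‖ ≤ r → 0 < D x := by
    intro x hx
    rcases hx.lt_or_eq with h | h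
    · have : 0 < r ^ 2 - ⟪x, x⟫ := by
        rw [real_inner_self_eq_norm_sq]; nlinarith [norm_nonneg x]
      have := mul_pos (hww x hx) this
      exact add_pos_of_nonneg_of_pos (sq_nonneg _) this
    · have h1 : r ^ 2 - ⟪x, x⟫ = 0 := by rw [real_inner_self_eq_norm_sq, h, sub_self]
      have := hs x h
      simp only [D, h1, mul_zero, add_zero]
      exact pow_pos this 2
  let lam : E → ℝ := fun x => (√(D x) - ⟪w x, x⟫) / ⟪w x, w x⟫
  refine zvf_noretract (fun x => x + lam x • w x) r hr ?_ ?_ ?_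
  · intro x hx
    have hDc : ContDiff ℝ 1 D := by
      simp only [D]
      exact ((hw.inner ℝ contDiff_id).pow 2).add ((hw.inner ℝ hw).mul
        (contDiff_const.sub (contDiff_id.inner ℝ contDiff_id)))
    have hl : ContDiffAt ℝ 1 lam x :=
      ((hDc.contDiffAt.sqrt (hD x hx).ne').sub (hw.inner ℝ contDiff_id).contDiffAt).div
        (hw.inner ℝ hw).contDiffAt (hww x hx).ne'
    exact contDiffAt_id.add (hl.smul hw.contDiffAt)
  · intro x hx
    have hsq := Real.sq_sqrt (hD x hx).le
    have hne := (hww x hx).ne'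
    have : ‖x + lam x • w x‖ ^ 2 = r ^ 2 := by
      rw [← real_inner_self_eq_norm_sq]
      simp only [inner_add_left, inner_add_right, inner_smul_left, inner_smul_right,
        real_inner_comm (w x) x, RCLike.conj_to_real]
      have hl : lam x * ⟪w x, w x⟫ = √(D x) - ⟪w x, x⟫ := div_mul_cancel₀ _ hne
      have hDe : D x = ⟪w x, x⟫ ^ 2 + ⟪w x, w x⟫ * (r ^ 2 - ⟪x, x⟫) := rfl
      have hq : (lam x * ⟪w x, w x⟫ + ⟪w x, x⟫) ^ 2 = D x := by rw [hl, sub_add_cancel, hsq]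
      rw [hDe] at hq
      rw [real_inner_comm] at hq ⊢
      apply mul_left_cancel₀ hne
      linear_combination hq
    exact (sq_eq_sq₀ (norm_nonneg _) hr.le).1 this
  · intro x hx
    have h1 : r ^ 2 - ⟪x, x⟫ = 0 := by rw [real_inner_self_eq_norm_sq, hx, sub_self]
    have : lam x = 0 := by
      simp only [lam, D, h1, mul_zero, add_zero, Real.sqrt_sq (hs x hx).le, sub_self, zero_div]
    simp [this]

/-- **Zeros of a vector field.** If a continuous `v : ℝⁿ → ℝⁿ` satisfies `v(u)·u ≥ 0`
whenever `‖u‖ = r` (for some `r > 0`), then `v` has a zero in the closed ball of radius `r`. -/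
theorem zeros_of_vector_field (n : ℕ)
    (v : EuclideanSpace ℝ (Fin n) → EuclideanSpace ℝ (Fin n))
    (hv : Continuous v) (r : ℝ) (hr : 0 < r)
    (h : ∀ u : EuclideanSpace ℝ (Fin n), ‖u‖ = r → 0 ≤ ⟪v u, u⟫) :
    ∃ u : EuclideanSpace ℝ (Fin n), ‖u‖ ≤ r ∧ v u = 0 := by
  by_contra! hne
  obtain ⟨x₀, hx₀, hmin⟩ := (isCompact_closedBall (0 : EuclideanSpace ℝ (Fin n)) r).exists_isMinOn
    ⟨0, by simp [hr.le]⟩ hv.norm.continuousOn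
  set m := ‖v x₀‖
  have hm : 0 < m := norm_pos_iff.2 (hne x₀ (by simpa using hx₀))
  have hmle : ∀ x, ‖x‖ ≤ r → m ≤ ‖v x‖ := fun x hx => hmin (by simpa using hx)
  let δ := m / (4 * r)
  have hδ : 0 < δ := by positivity
  have hδr : δ * r = m / 4 := by simp only [δ]; field_simp
  obtain ⟨w, hw, hwv, -⟩ := (hv.add (continuous_const_smul δ)).exists_contDiff_approx 1
    (ε := fun _ => m / 4) continuous_const (fun _ => by positivity)
  have hd : ∀ x, ‖w x - (v x + δ • x)‖ < m / 4 := fun x => by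
    rw [← dist_eq_norm]; exact hwv x
  refine zvf_smooth w r hr (by exact_mod_cast hw) ?_ ?_
  · intro x hx h0
    have h1 := hd x
    rw [h0, zero_sub, norm_neg] at h1
    have h2 : ‖v x‖ ≤ ‖v x + δ • x‖ + ‖δ • x‖ := by
      simpa using norm_sub_le (v x + δ • x) (δ • x)
    rw [norm_smul, Real.norm_of_nonneg hδ.le] at h2
    have h3 : δ * ‖x‖ ≤ δ * r := by gcongr
    have := hmle x hx
    linarith
  · intro x hx
    have e : ⟪w x, x⟫ = ⟪w x - (v x + δ • x), x⟫ + ⟪v x, x⟫ + δ * (r * r) := by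
      rw [inner_sub_left, inner_add_left, real_inner_smul_left,
        real_inner_self_eq_norm_mul_norm, hx]
      ring
    have h1 := abs_le.1 (abs_real_inner_le_norm (w x - (v x + δ • x)) x)
    rw [hx] at h1
    have h2 := h x hx
    have h3 : ‖w x - (v x + δ • x)‖ * r < δ * (r * r) := by
      rw [← mul_assoc, hδr]; exact mul_lt_mul_of_pos_right (hd x) hr
    rw [e]
    linarith [h1.1]
end

section
/- Let m, d, n ∈ ℕ, let w_e > 0 for e = 1,…,m, and for each e let ‖·‖_e be the norm on ℝᵈ induced by a symmetric positive-definite matrix. Let σ̂_e : ℝᵈ → ℝᵈ be continuous functions and B_e : ℝⁿ → ℝᵈ linear maps. Assume: (i) material stability: there exist a > 0, b ≥ 0 such that σ̂_e(ε)·ε ≥ a‖ε‖_e² − b for all ε ∈ ℝᵈ and all e; (ii) structural stability: there is c > 0 such that ‖u‖² ≤ c · Σ_{e=1}^m w_e ‖B_e u‖_e² for all u ∈ ℝⁿ. Then for every f ∈ ℝⁿ there exists u* ∈ ℝⁿ satisfying Σ_{e=1}^m w_e σ̂_e(B_e u*)·(B_e v) = f·v for all v ∈ ℝⁿ, and this solution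 satisfies ‖u*‖² ≤ (a/c − ε)⁻¹ ( ‖f‖²/(4ε) + b·V ) for every 0 < ε < a/c, where V = Σ_{e=1}^m w_e. -/
open Matrix

section BrouwerTools
open MeasureTheory Metric
open scoped NNReal

variable {E : Type*} [NormedAddCommGroup E] [InnerProductSpace ℝ E] [FiniteDimensional ℝ E]

/-- `det (1 + t A)` is a polynomial in `t` of degree at most `dim E`. -/
lemma det_poly (A : E →L[ℝ] E) : ∃ p : Polynomial ℝ, p.natDegree ≤ Module.finrank ℝ E ∧
    ∀ t : ℝ, p.eval t = (ContinuousLinearMap.id ℝ E + t • A).det := by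
  let b := Module.finBasis ℝ E
  let M := LinearMap.toMatrix b b (A : E →ₗ[ℝ] E)
  refine ⟨det ((Polynomial.X : Polynomial ℝ) • M.map Polynomial.C
    + (1 : Matrix _ _ ℝ).map Polynomial.C), ?_, ?_⟩
  · simpa using Polynomial.natDegree_det_X_add_C_le M 1
  · intro t
    have h1 : (ContinuousLinearMap.id ℝ E + t • A).det = det (t • M + 1) := by
      rw [ContinuousLinearMap.det, ← LinearMap.det_toMatrix b]
      congr 1
      rw [ContinuousLinearMap.toLinearMap_add, ContinuousLinearMap.toLinearMap_smul, map_add,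
        map_smul, add_comm]
      congr 1
      exact LinearMap.toMatrix_id b
    rw [h1, ← Polynomial.coe_evalRingHom, RingHom.map_det]
    congr 1
    ext i j
    by_cases hij : i = j
    · subst hij
      simp
      ring
    · simp [Matrix.one_apply_ne hij]
      ring

lemma lagrange_det (t : ℕ → ℝ) (ht : Function.Injective t) : ∃ c : ℕ → ℝ,
    (∑ i ∈ Finset.range (Module.finrank ℝ E + 1), c i = 1) ∧
    ∀ A : E →L[ℝ] E, (ContinuousLinearMap.id ℝ E + A).det =
      ∑ i ∈ Finset.range (Module.finrank ℝ E + 1),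
        c i * (ContinuousLinearMap.id ℝ E + t i • A).det := by
  set s := Finset.range (Module.finrank ℝ E + 1)
  refine ⟨fun i => (Lagrange.basis s t i).eval 1, ?_, fun A => ?_⟩
  · rw [← Polynomial.eval_finsetSum, Lagrange.sum_basis ht.injOn (by simp [s])]
    simp
  · obtain ⟨p, hp, hpe⟩ := det_poly A
    have h1 := Lagrange.eq_interpolate (s := s) (v := t) (f := p) ht.injOn (by
      refine lt_of_le_of_lt Polynomial.degree_le_natDegree ?_
      simp only [s, Finset.card_range]
      exact_mod_cast Nat.lt_succ_of_le hp)
    have h2 := hpe 1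
    rw [one_smul] at h2
    rw [← h2]
    conv_lhs => rw [h1]
    rw [Lagrange.interpolate_apply, Polynomial.eval_finsetSum]
    refine Finset.sum_congr rfl fun i _ => ?_
    rw [Polynomial.eval_mul, Polynomial.eval_C, hpe, mul_comm]

lemma det_pos_of_small (A : E →L[ℝ] E) (t : ℝ) (ht : 0 ≤ t) (h : t * ‖A‖ < 1) :
    0 < (ContinuousLinearMap.id ℝ E + t • A).det := by
  have hne : ∀ s ∈ Set.Icc 0 t, (ContinuousLinearMap.id ℝ E + s • A).det ≠ 0 := by
    intro s hs h0
    have := LinearMap.bot_lt_ker_of_det_eq_zero (f := ((ContinuousLinearMap.id ℝ E + s • A : E →L[ℝ] E) : E →ₗ[ℝ] E)) h0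
    obtain ⟨v, hv, hv0⟩ := Submodule.exists_mem_ne_zero_of_ne_bot this.ne'
    have hv1 : v + s • A v = 0 := by simpa using hv
    have h2 : ‖v‖ = s * ‖A v‖ := by
      have := congrArg norm (eq_neg_of_add_eq_zero_left hv1)
      rwa [norm_neg, norm_smul, Real.norm_of_nonneg hs.1] at this
    have h3 := A.le_opNorm v
    have h4 : 0 < ‖v‖ := norm_pos_iff.2 hv0
    have h5 : s * ‖A v‖ ≤ t * (‖A‖ * ‖v‖) := mul_le_mul hs.2 h3 (norm_nonneg _) ht
    nlinarith
  have hcont : Continuous fun s : ℝ => (ContinuousLinearMap.id ℝ E + s • A).det :=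
    ContinuousLinearMap.continuous_det.comp (by fun_prop)
  by_contra hneg
  push Not at hneg
  have := intermediate_value_Icc' ht hcont.continuousOn
  obtain ⟨s, hs, hs0⟩ := this (a := 0) ⟨hneg, by simp [ContinuousLinearMap.det]⟩
  exact hne s hs hs0

/-- extension by zero is Lipschitz -/
lemma lip_extend {φ : E → E} {S : ℝ} {K : ℝ≥0} (hφ : LipschitzOnWith K φ (closedBall 0 S))
    (hS : ∀ x, ‖x‖ = S → φ x = 0) : 
    LipschitzWith K (Set.indicator (ball 0 S) φ) := by
  have key : ∀ x y : E, x ∈ ball (0:E) S → y ∉ ball (0:E) S → dist (φ x) 0 ≤ K * dist x y := by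
    intro x y hx hy
    simp only [mem_ball, dist_zero_right, not_lt] at hx hy
    have hc : ContinuousOn (fun s : ℝ => ‖x + s • (y - x)‖) (Set.Icc 0 1) := by fun_prop
    obtain ⟨s, hs, hs1⟩ := intermediate_value_Icc zero_le_one hc
      (show S ∈ _ from ⟨by simpa using hx.le, by simpa using hy⟩)
    simp only at hs1
    have := hφ.dist_le_mul x (by simpa using hx.le) (x + s • (y - x)) (by simpa using hs1.le)
    rw [hS _ hs1] at this
    refine this.trans (mul_le_mul_of_nonneg_left ?_ K.2)
    rw [dist_self_add_right, norm_smul, Real.norm_of_nonneg hs.1, dist_comm, dist_eq_norm]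
    nlinarith [norm_nonneg (y - x), hs.2]
  refine LipschitzWith.of_dist_le_mul fun x y => ?_
  by_cases hx : x ∈ ball (0:E) S <;> by_cases hy : y ∈ ball (0:E) S
  · simp only [Set.indicator_of_mem hx, Set.indicator_of_mem hy]
    exact hφ.dist_le_mul x (ball_subset_closedBall hx) y (ball_subset_closedBall hy)
  · simp only [Set.indicator_of_mem hx, Set.indicator_of_notMem hy]
    exact key x y hx hy
  · simp only [Set.indicator_of_notMem hx, Set.indicator_of_mem hy]
    rw [dist_comm, dist_comm x y]
    exact key y x hy hx
  · simp only [Set.indicator_of_notMem hx, Set.indicator_of_notMem hy, dist_self]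
    positivity

lemma image_ball {h : E → E} {U : Set E} {K : ℝ≥0} (hh : LipschitzWith K h)
    (h0 : ∀ x ∉ U, h x = 0) {t : ℝ} (ht : 0 ≤ t) (htK : t * K < 1) :
    Function.Injective (fun x => x + t • h x) ∧ (fun x => x + t • h x) '' U = U := by
  have inj : Function.Injective (fun x => x + t • h x) := by
    intro x y hxy
    simp only at hxy
    have h1 : x - y = t • (h y - h x) := by
      rw [smul_sub]; rw [← sub_eq_zero] at hxy ⊢; rw [← hxy]; abel
    have h2 : ‖x - y‖ ≤ t * (K * ‖x - y‖) := by
      conv_lhs => rw [h1, norm_smul, Real.norm_of_nonneg ht]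
      have := hh.dist_le_mul y x
      rw [dist_eq_norm, dist_eq_norm, norm_sub_rev y x] at this
      gcongr
    by_contra hne
    have : 0 < ‖x - y‖ := norm_pos_iff.2 (sub_ne_zero.2 hne)
    nlinarith
  refine ⟨inj, Set.Subset.antisymm ?_ ?_⟩
  · rintro _ ⟨x, hx, rfl⟩
    by_contra hy
    have := inj (a₁ := x + t • h x) (a₂ := x) (by simp only [h0 _ hy]; simp)
    refine hy ?_
    simp only [this]
    exact hx
  · intro y hy
    have hcon : ContractingWith (t.toNNReal * K) (fun z => y - t • h z) := by
      refine ⟨by rw [← NNReal.coe_lt_coe]; simpa [Real.coe_toNNReal _ ht] using htK, LipschitzWith.of_dist_le_mul fun a b => ?_⟩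
      rw [dist_sub_left, dist_smul₀, Real.norm_of_nonneg ht]
      have := hh.dist_le_mul a b
      calc _ ≤ t * (K * dist a b) := by gcongr
        _ = _ := by rw [NNReal.coe_mul, Real.coe_toNNReal _ ht, mul_assoc]
    have hf := hcon.fixedPoint_isFixedPt
    set z := ContractingWith.fixedPoint _ hcon
    have hz : z + t • h z = y := by
      have : y - t • h z = z := hf
      exact (sub_eq_iff_eq_add.1 this).symm
    by_cases hzU : z ∈ U
    · exact ⟨z, hzU, hz⟩
    · rw [h0 z hzU] at hz
      simp at hz
      exact absurd (hz ▸ hy) hzU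

/-- There is no nowhere-vanishing `C¹` field equal to the identity outside of a ball. -/
lemma no_nonvanishing {G : E → E} (hG : ContDiff ℝ 1 G) {S : ℝ} (hS : 0 < S)
    (hid : ∀ x, ‖x‖ = S → G x = x) (hne : ∀ x, G x ≠ 0) : False := by
  borelize E
  let μ : Measure E := Measure.addHaar
  let r : E → E := fun x => (S / ‖G x‖) • G x
  have hr : ContDiff ℝ 1 r := by
    refine ContDiff.smul (contDiff_const.div (hG.norm ℝ hne) fun x => norm_ne_zero_iff.2 (hne x)) hG
  have hrn : ∀ x, ‖r x‖ = S := fun x => by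
    have := norm_ne_zero_iff.2 (hne x)
    simp only [r, norm_smul, norm_div, norm_norm, Real.norm_of_nonneg hS.le]
    field_simp
  let φ : E → E := fun x => r x - x
  have hφ : ContDiff ℝ 1 φ := hr.sub contDiff_id
  have hφ0 : ∀ x, ‖x‖ = S → φ x = 0 := fun x hx => by
    simp [φ, r, hid x hx, hx, hS.ne']
  obtain ⟨K, hK⟩ := hφ.contDiffOn.exists_lipschitzOnWith (s := closedBall (0:E) S) one_ne_zero
    (convex_closedBall _ _) (isCompact_closedBall _ _)
  have hext := lip_extend hK hφ0
  set h := Set.indicator (ball 0 S) φ with hh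
  have hderiv : ∀ x, HasFDerivAt φ (fderiv ℝ φ x) x := fun x =>
    (hφ.differentiable one_ne_zero x).hasFDerivAt
  have hnorm : ∀ x ∈ ball (0:E) S, ‖fderiv ℝ φ x‖ ≤ K := by
    intro x hx
    exact norm_fderiv_le_of_lipschitzOn ℝ (Filter.mem_of_superset (isOpen_ball.mem_nhds hx) ball_subset_closedBall) hK
  have hcont : ∀ t : ℝ, Continuous fun x => (ContinuousLinearMap.id ℝ E + t • fderiv ℝ φ x).det := by
    intro t
    have := hφ.continuous_fderiv one_ne_zero
    exact ContinuousLinearMap.continuous_det.comp (by fun_prop)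
  have hint : ∀ t : ℝ, IntegrableOn (fun x => (ContinuousLinearMap.id ℝ E + t • fderiv ℝ φ x).det) (ball 0 S) μ := by
    intro t
    exact ((hcont t).continuousOn.integrableOn_compact (isCompact_closedBall (0:E) S)).mono_set ball_subset_closedBall
  have hvol : ∀ t : ℝ, 0 ≤ t → t * K < 1 →
      ∫ x in ball (0:E) S, (ContinuousLinearMap.id ℝ E + t • fderiv ℝ φ x).det ∂μ = μ.real (ball 0 S) := by
    intro t ht htK
    obtain ⟨inj, him⟩ := image_ball hext (U := ball 0 S) (fun x hx => Set.indicator_of_notMem hx _) ht htK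
    have := integral_image_eq_integral_abs_det_fderiv_smul μ (s := ball (0:E) S)
      (f := fun x => x + t • h x) (f' := fun x => ContinuousLinearMap.id ℝ E + t • fderiv ℝ φ x)
      measurableSet_ball (fun x hx => by
        have h1 : HasFDerivAt (fun x => x + t • φ x) (ContinuousLinearMap.id ℝ E + t • fderiv ℝ φ x) x :=
          (hasFDerivAt_id x).add ((hderiv x).const_smul t)
        refine h1.hasFDerivWithinAt.congr (fun y hy => ?_) ?_
        · simp [hh, Set.indicator_of_mem hy]
        · simp [hh, Set.indicator_of_mem hx]) inj.injOn (fun _ => (1:ℝ))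
    rw [him] at this
    simp only [smul_eq_mul, mul_one, integral_const, MeasurableSet.univ, measureReal_restrict_apply, Set.univ_inter] at this
    rw [this]
    refine setIntegral_congr_fun measurableSet_ball fun x hx => ?_
    refine (abs_of_pos (det_pos_of_small _ t ht ?_)).symm
    exact (mul_le_mul_of_nonneg_left (hnorm x hx) ht).trans_lt htK
  have hzero : ∀ x, (ContinuousLinearMap.id ℝ E + fderiv ℝ φ x).det = 0 := by
    intro x
    by_contra hdet
    have hD : HasFDerivAt r (ContinuousLinearMap.id ℝ E + fderiv ℝ φ x) x := by
      have := (hasFDerivAt_id x).add (hderiv x)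
      refine this.congr_of_eventuallyEq (Filter.Eventually.of_forall fun y => ?_)
      simp [φ]
    set D := ContinuousLinearMap.id ℝ E + fderiv ℝ φ x
    have h1 : HasFDerivAt (fun y => ‖r y‖ ^ 2) _ x := hD.norm_sq
    have h2 : HasFDerivAt (fun y => ‖r y‖ ^ 2) (0 : E →L[ℝ] ℝ) x := by
      simp only [hrn]; exact hasFDerivAt_const _ _
    have h3 := h1.unique h2
    have hu : IsUnit (LinearMap.det (D : E →ₗ[ℝ] E)) := isUnit_iff_ne_zero.2 hdet
    have hsurj := ((LinearMap.isUnit_iff_isUnit_det _).2 hu)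
    have hsurj := ((Module.End.isUnit_iff _).1 hsurj).2
    obtain ⟨v, hv⟩ := hsurj (r x)
    have h4 := congrArg (fun L : E →L[ℝ] ℝ => L v) h3
    have hv' : D v = r x := hv
    simp [hv'] at h4
    have := hrn x
    rw [h4] at this
    simp at this
    exact hS.ne this
  obtain ⟨c, hc1, hc⟩ := lagrange_det (E := E) (fun i : ℕ => 1 / ((K + 1 : ℝ) * (i + 1))) (by
    intro i j hij
    have hK1 : (0:ℝ) < K + 1 := by positivity
    simp only at hij
    field_simp at hij
    have : (j:ℝ) = i := by linarith
    exact_mod_cast this.symm)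
  have h0 : ∫ x in ball (0:E) S, (ContinuousLinearMap.id ℝ E + fderiv ℝ φ x).det ∂μ = 0 := by
    simp [hzero]
  rw [funext fun x => hc (fderiv ℝ φ x)] at h0
  rw [integral_finsetSum _ fun i _ => (hint _).const_mul _] at h0
  simp_rw [integral_const_mul] at h0
  rw [Finset.sum_congr rfl fun i _ => by
    rw [hvol (1 / ((K + 1 : ℝ) * (i + 1))) (by positivity) (by
      rw [div_mul_eq_mul_div, one_mul, div_lt_one (by positivity)]
      have : (0:ℝ) ≤ i := by positivity
      have : (0:ℝ) ≤ K := by positivity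
      nlinarith)], ← Finset.sum_mul, hc1, one_mul] at h0
  have : 0 < μ.real (ball (0:E) S) := ENNReal.toReal_pos (measure_ball_pos μ _ hS).ne' measure_ball_lt_top.ne
  exact this.ne' h0

lemma exists_zero_smooth {g : E → E} (hg : ContDiff ℝ 1 g) {R : ℝ} (hR : 0 < R)
    (hpos : ∀ x, R ≤ ‖x‖ → 0 < inner ℝ (g x) x) : ∃ x, ‖x‖ ≤ R ∧ g x = 0 := by
  by_contra hno
  push Not at hno
  let β : ContDiffBump (0:E) := ⟨R, 2 * R, hR, by linarith⟩
  refine no_nonvanishing (G := fun x => β x • g x + (1 - β x) • x) (S := 2 * R) ?_ (by linarith) ?_ ?_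
  · have := β.contDiff (n := 1)
    fun_prop
  · intro x hx
    have : β x = 0 := β.zero_of_le_dist (by simp [hx, β])
    simp [this]
  · intro x h0
    by_cases hx : ‖x‖ ≤ R
    · have : β x = 1 := β.one_of_mem_closedBall (by simpa [β] using hx)
      simp [this] at h0
      exact hno x hx h0
    · push Not at hx
      have h1 := hpos x hx.le
      have h2 := congrArg (fun y => inner ℝ y x) h0
      simp only [inner_add_left, inner_smul_left, inner_zero_left, real_inner_self_eq_norm_sq] at h2
      simp at h2
      have h3 := β.nonneg (x := x)
      have h4 := β.le_one (x := x)
      have h5 : 0 < ‖x‖ ^ 2 := by have := hR.trans hx; positivity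
      rcases h3.eq_or_lt with h6 | h6
      · rw [← h6] at h2; simp at h2; rw [h2] at h5; simp at h5
      · nlinarith [mul_pos h6 h1, mul_nonneg (sub_nonneg.2 h4) h5.le]

lemma exists_zero_cont {g : E → E} (hg : Continuous g) {R : ℝ} (hR : 0 < R)
    (hpos : ∀ x, R ≤ ‖x‖ → ‖x‖ ≤ inner ℝ (g x) x) : ∃ x, g x = 0 := by
  by_contra hno
  push Not at hno
  obtain ⟨x0, -, hx0⟩ := (isCompact_closedBall (0:E) R).exists_isMinOn ⟨0, by simp [hR.le]⟩
    hg.norm.continuousOn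
  have hη : 0 < ‖g x0‖ := norm_pos_iff.2 (hno x0)
  obtain ⟨G, hG, hGd, -⟩ := hg.exists_contDiff_approx 1 (ε := fun _ => min ‖g x0‖ 1)
    continuous_const (fun _ => lt_min hη one_pos)
  obtain ⟨x, hx, hGx⟩ := exists_zero_smooth hG hR fun x hx => by
    have h1 := hpos x hx
    have h2 := (hGd x).trans_le (min_le_right _ _)
    rw [dist_eq_norm] at h2
    have h3 := abs_le.1 (abs_real_inner_le_norm (G x - g x) x)
    rw [inner_sub_left] at h3
    have : 0 < ‖x‖ := hR.trans_le hx
    nlinarith [h3.1]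
  have h2 := (hGd x).trans_le (min_le_left _ _)
  rw [hGx, dist_zero_left] at h2
  exact absurd (hx0 (by simpa using hx)) (by simpa using h2)

end BrouwerTools


/-- **Existence of solutions** for the effective displacement problem
`w Bᵀ σ̂(B u) = f` (in weak form), under material stability and structural
stability, together with the a-priori bound
`‖u*‖² ≤ (a/c − ε)⁻¹ (‖f‖²/(4ε) + bV)` for all `0 < ε < a/c`, `V = Σ_e w_e`.
The norm `‖·‖_e` on `ℝᵈ` is the one induced by the symmetric positive-definite
matrix `𝔹 e`, i.e. `‖x‖_e² = (𝔹 e) x ⬝ᵥ x`; norms on `ℝⁿ` are Euclidean,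
`‖u‖² = u ⬝ᵥ u`. -/
theorem existence_of_solutions (m d n : ℕ)
    (w : Fin m → ℝ) (hw : ∀ e, 0 < w e)
    (𝔹 : Fin m → Matrix (Fin d) (Fin d) ℝ) (h𝔹 : ∀ e, (𝔹 e).PosDef)
    (σ : Fin m → (Fin d → ℝ) → (Fin d → ℝ)) (hσ : ∀ e, Continuous (σ e))
    (B : Fin m → (Fin n → ℝ) →ₗ[ℝ] (Fin d → ℝ))
    (a b : ℝ) (ha : 0 < a) (hb : 0 ≤ b)
    (hmat : ∀ e (ε : Fin d → ℝ), a * ((𝔹 e).mulVec ε ⬝ᵥ ε) - b ≤ σ e ε ⬝ᵥ ε)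
    (c : ℝ) (hc : 0 < c)
    (hstruct : ∀ u : Fin n → ℝ,
      u ⬝ᵥ u ≤ c * ∑ e, w e * ((𝔹 e).mulVec (B e u) ⬝ᵥ (B e u)))
    (f : Fin n → ℝ) :
    ∃ u : Fin n → ℝ,
      (∀ v : Fin n → ℝ, ∑ e, w e * (σ e (B e u) ⬝ᵥ (B e v)) = f ⬝ᵥ v) ∧
      ∀ ε : ℝ, 0 < ε → ε < a / c →
        u ⬝ᵥ u ≤ (a / c - ε)⁻¹ * ((f ⬝ᵥ f) / (4 * ε) + b * ∑ e, w e) := by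
  -- coercivity of the internal forces
  have hcoer : ∀ u : Fin n → ℝ, a / c * (u ⬝ᵥ u) - b * ∑ e, w e ≤
      ∑ e, w e * (σ e (B e u) ⬝ᵥ (B e u)) := by
    intro u
    have h1 : a / c * (u ⬝ᵥ u) ≤ a * ∑ e, w e * ((𝔹 e).mulVec (B e u) ⬝ᵥ (B e u)) := by
      have := mul_le_mul_of_nonneg_left (hstruct u) (div_pos ha hc).le
      rwa [← mul_assoc, div_mul_cancel₀ _ hc.ne'] at this
    have h2 : a * ∑ e, w e * ((𝔹 e).mulVec (B e u) ⬝ᵥ (B e u)) - b * ∑ e, w e ≤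
        ∑ e, w e * (σ e (B e u) ⬝ᵥ (B e u)) := by
      rw [Finset.mul_sum, Finset.mul_sum, ← Finset.sum_sub_distrib]
      refine Finset.sum_le_sum fun e _ => ?_
      have := mul_le_mul_of_nonneg_left (hmat e (B e u)) (hw e).le
      linarith
    linarith
  -- the residual, as a vector field
  let T : (Fin n → ℝ) → (Fin n → ℝ) := fun u i =>
    ∑ e, w e * (σ e (B e u) ⬝ᵥ (B e (Pi.single i 1))) - f i
  have hT : ∀ u v, T u ⬝ᵥ v = ∑ e, w e * (σ e (B e u) ⬝ᵥ (B e v)) - f ⬝ᵥ v := by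
    intro u v
    have hv : ∀ e, B e v = ∑ i, v i • B e (Pi.single i 1) := by
      intro e
      conv_lhs => rw [pi_eq_sum_univ' v]
      rw [map_sum]
      refine Finset.sum_congr rfl fun i _ => ?_
      rw [← map_smul]
    have : ∀ e, w e * (σ e (B e u) ⬝ᵥ (B e v)) =
        ∑ i, w e * (σ e (B e u) ⬝ᵥ (B e (Pi.single i 1))) * v i := by
      intro e
      rw [hv e, dotProduct_sum, Finset.mul_sum]
      refine Finset.sum_congr rfl fun i _ => ?_
      rw [dotProduct_smul, smul_eq_mul]; ring
    simp_rw [this]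
    rw [Finset.sum_comm]
    simp only [dotProduct, T, ← Finset.sum_sub_distrib]
    refine Finset.sum_congr rfl fun i _ => ?_
    rw [sub_mul, Finset.sum_mul]
  have hTc : Continuous T := by
    have hB : ∀ e, Continuous (B e) := fun e => LinearMap.continuous_of_finiteDimensional _
    refine continuous_pi fun i => Continuous.sub (continuous_finsetSum _ fun e _ => ?_) continuous_const
    exact continuous_const.mul (((hσ e).comp (hB e)).dotProduct continuous_const)
  let g : EuclideanSpace ℝ (Fin n) → EuclideanSpace ℝ (Fin n) := fun x => WithLp.toLp 2 (T x.ofLp)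
  have hgc : Continuous g := by
    have := PiLp.continuous_ofLp 2 (fun _ : Fin n => ℝ)
    exact (PiLp.continuous_toLp 2 _).comp (hTc.comp this)
  have hinner : ∀ x y : EuclideanSpace ℝ (Fin n), inner ℝ x y = x.ofLp ⬝ᵥ y.ofLp := by
    intro x y
    simp [PiLp.inner_apply, dotProduct, mul_comm]
  have hac : 0 < a / c := div_pos ha hc
  have hV : 0 ≤ b * ∑ e, w e := mul_nonneg hb (Finset.sum_nonneg fun e _ => (hw e).le)
  set V := b * ∑ e, w e with hVdef
  set F : EuclideanSpace ℝ (Fin n) := WithLp.toLp 2 f with hF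
  obtain ⟨x, hx⟩ := exists_zero_cont hgc (R := 1 + (V + ‖F‖ + 1) / (a / c)) (by positivity) (by
    intro x hx
    rw [hinner]
    change _ ≤ T x.ofLp ⬝ᵥ x.ofLp
    rw [hT]
    have h1 := hcoer x.ofLp
    have h2 := real_inner_le_norm F x
    rw [hinner] at h2
    have h3 : x.ofLp ⬝ᵥ x.ofLp = ‖x‖ ^ 2 := by rw [← hinner, real_inner_self_eq_norm_sq]
    rw [h3] at h1
    have h4 : (0:ℝ) ≤ (V + ‖F‖ + 1) / (a / c) := by positivity
    have h5 : 1 ≤ ‖x‖ := by linarith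
    have h6 : V + ‖F‖ + 1 ≤ ‖x‖ * (a / c) := by
      rw [← div_le_iff₀ hac]; linarith
    have h7 := mul_le_mul_of_nonneg_right h6 (norm_nonneg x)
    have h8 : V ≤ V * ‖x‖ := le_mul_of_one_le_right hV h5
    change f ⬝ᵥ x.ofLp ≤ _ at h2
    nlinarith)
  have hTx : T x.ofLp = 0 := by
    have := congrArg WithLp.ofLp hx
    simpa [g] using this
  have hsol : ∀ v : Fin n → ℝ, ∑ e, w e * (σ e (B e x.ofLp) ⬝ᵥ (B e v)) = f ⬝ᵥ v := by
    intro v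
    have := hT x.ofLp v
    rw [hTx, zero_dotProduct] at this
    linarith
  refine ⟨x.ofLp, hsol, fun ε hε hεc => ?_⟩
  have h1 := hcoer x.ofLp
  rw [hsol] at h1
  have h2 : f ⬝ᵥ x.ofLp ≤ ε * (x.ofLp ⬝ᵥ x.ofLp) + (f ⬝ᵥ f) / (4 * ε) := by
    rw [dotProduct, dotProduct, dotProduct, Finset.mul_sum, Finset.sum_div, ← Finset.sum_add_distrib]
    refine Finset.sum_le_sum fun i _ => ?_
    have : ε * (x.ofLp i * x.ofLp i) + f i * f i / (4 * ε) - f i * x.ofLp i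
        = (2 * ε * x.ofLp i - f i) ^ 2 / (4 * ε) := by field_simp; ring
    have : 0 ≤ (2 * ε * x.ofLp i - f i) ^ 2 / (4 * ε) := by positivity
    linarith
  rw [← div_eq_inv_mul, le_div_iff₀ (by linarith)]
  linarith
end

section
/- Under the hypotheses of the existence result (continuous σ̂_e : ℝᵈ → ℝᵈ satisfying material stability σ̂_e(ε)·ε ≥ a‖ε‖_e² − b with a > 0, b ≥ 0, and structural stability ‖u‖² ≤ c Σ_e w_e‖B_e u‖_e²), assume in addition strict monotonicity: there is θ > 0 such that (σ̂_e(ε′) − σ̂_e(ε″))·(ε′ − ε″) ≥ θ‖ε′ − ε″‖_e² for all ε′, ε″ ∈ ℝᵈ and all e. Then for each f ∈ ℝⁿ the solution u* of the problem Σ_e w_e σ̂_e(B_e u*)·(B_e v) = f·v for all v ∈ ℝⁿ is unique. -/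
open Matrix

/-- **Uniqueness of solutions** of the effective displacement problem
`w Bᵀ σ̂(B u) = f` (in weak form), under material stability, structural
stability and strict monotonicity of the material laws.
The norm `‖·‖_e` on `ℝᵈ` is the one induced by the symmetric positive-definite
matrix `𝔹 e`, i.e. `‖x‖_e² = (𝔹 e) x ⬝ᵥ x`; norms on `ℝⁿ` are Euclidean. -/
theorem uniqueness_of_solutions (m d n : ℕ)
    (w : Fin m → ℝ) (hw : ∀ e, 0 < w e)
    (𝔹 : Fin m → Matrix (Fin d) (Fin d) ℝ) (h𝔹 : ∀ e, (𝔹 e).PosDef)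
    (σ : Fin m → (Fin d → ℝ) → (Fin d → ℝ)) (hσ : ∀ e, Continuous (σ e))
    (B : Fin m → (Fin n → ℝ) →ₗ[ℝ] (Fin d → ℝ))
    (a b : ℝ) (ha : 0 < a) (hb : 0 ≤ b)
    (hmat : ∀ e (ε : Fin d → ℝ), a * ((𝔹 e).mulVec ε ⬝ᵥ ε) - b ≤ σ e ε ⬝ᵥ ε)
    (c : ℝ) (hc : 0 < c)
    (hstruct : ∀ u : Fin n → ℝ,
      u ⬝ᵥ u ≤ c * ∑ e, w e * ((𝔹 e).mulVec (B e u) ⬝ᵥ (B e u)))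
    (θ : ℝ) (hθ : 0 < θ)
    (hmono : ∀ e (ε' ε'' : Fin d → ℝ),
      θ * ((𝔹 e).mulVec (ε' - ε'') ⬝ᵥ (ε' - ε'')) ≤
        (σ e ε' - σ e ε'') ⬝ᵥ (ε' - ε''))
    (f : Fin n → ℝ) :
    ∀ u₁ u₂ : Fin n → ℝ,
      (∀ v : Fin n → ℝ, ∑ e, w e * (σ e (B e u₁) ⬝ᵥ (B e v)) = f ⬝ᵥ v) →
      (∀ v : Fin n → ℝ, ∑ e, w e * (σ e (B e u₂) ⬝ᵥ (B e v)) = f ⬝ᵥ v) →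
      u₁ = u₂ := by
  intro u₁ u₂ h₁ h₂
  have key : θ * ∑ e, w e * ((𝔹 e).mulVec (B e (u₁ - u₂)) ⬝ᵥ (B e (u₁ - u₂))) ≤ 0 := by
    calc θ * ∑ e, w e * ((𝔹 e).mulVec (B e (u₁ - u₂)) ⬝ᵥ (B e (u₁ - u₂)))
        = ∑ e, w e * (θ * ((𝔹 e).mulVec (B e (u₁ - u₂)) ⬝ᵥ (B e (u₁ - u₂)))) := by
          rw [Finset.mul_sum]
          exact Finset.sum_congr rfl fun e _ => by ring
      _ ≤ ∑ e, w e * ((σ e (B e u₁) - σ e (B e u₂)) ⬝ᵥ (B e (u₁ - u₂))) := by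
          refine Finset.sum_le_sum fun e _ => mul_le_mul_of_nonneg_left ?_ (hw e).le
          rw [map_sub]
          exact hmono e _ _
      _ = ∑ e, w e * (σ e (B e u₁) ⬝ᵥ (B e (u₁ - u₂)))
          - ∑ e, w e * (σ e (B e u₂) ⬝ᵥ (B e (u₁ - u₂))) := by
          rw [← Finset.sum_sub_distrib]
          exact Finset.sum_congr rfl fun e _ => by rw [sub_dotProduct, mul_sub]
      _ = 0 := by rw [h₁, h₂, sub_self]
  have hS := nonpos_of_mul_nonpos_right key hθ
  have h0 : (u₁ - u₂) ⬝ᵥ (u₁ - u₂) ≤ 0 :=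
    (hstruct _).trans (mul_nonpos_of_nonneg_of_nonpos hc.le hS)
  have h1 : 0 ≤ (u₁ - u₂) ⬝ᵥ (u₁ - u₂) :=
    Finset.sum_nonneg fun i _ => mul_self_nonneg _
  exact sub_eq_zero.mp (dotProduct_self_eq_zero.mp (le_antisymm h0 h1))
end

section
/- (Uniform approximation by point data.) Let w_e > 0 and let σ̂_e : ℝᵈ → ℝᵈ be continuous, satisfy material stability σ̂_e(ε)·ε ≥ a‖ε‖_e² − b (a > 0, b ≥ 0), and be locally Lipschitz: for each R > 0 there is L_R > 0 with ‖σ̂_e(ε) − σ̂_e(ε′)‖_e ≤ L_R‖ε − ε′‖_e whenever ‖ε‖_e, ‖ε′‖_e < R. Let B_e : ℝⁿ → ℝᵈ be linear with ‖u‖² ≤ c Σ_e w_e‖B_e u‖_e². Let G_e = {(ε, σ̂_e(ε)) : ε ∈ ℝᵈ} and, for each h ∈ ℕ, let D_{e,h} ⊂ ℝᵈ × ℝᵈ be a finite nonempty set. Assume there are sequences t_h → 0, ρ_h → 0, δ_h → 0, R_h → ∞ with: (1) every y ∈ D_{e,h} satisfies ‖y − z‖_{Z_e} < t_h for some z ∈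 G_e; (2) for every ε with ‖ε‖_e ≤ 2R_h there is y ∈ D_{e,h} with ‖(ε, σ̂_e(ε)) − y‖_{Z_e} < ρ_h; (3) L_{2R_h}(t_h + ρ_h + δ_h) → 0. Fix a symmetric positive-definite matrix ℂ_e and define s_{e,h} : ℝᵈ → ℝᵈ by: for ‖ε‖_e < R_h, s_{e,h}(ε) = η_e where (ξ_e, η_e) ∈ D_{e,h} has ξ_e closest to ε among the data strains (any measurable choice); for ‖ε‖_e ≥ R_h, s_{e,h}(ε) = ℂ_e ε. Let σ̂_{e,h} = ψ_{δ_h} ∗ s_{e,h}, where ψ_δ ∈ C_c^∞(B_δ; [0,∞)) is an even mollification kernel with unit integral. Then for all sufficiently large h and every f ∈ ℝⁿ the problem Σ_e w_e σ̂_{e,h}(B_e u_h)·(B_e v) = f·v (for all v) has a solution u_h, and a subsequence of (u_h) converges to a solution u of the limiting problem Σ_e w_e σ̂_e(B_e u)·(B_e v) = f·v. If moreover each σ̂_e is strictly monotone, i.e. (σ̂_e(ε′) − σ̂_e(ε″))·(ε′ − ε″) ≥ θ‖ε′ − ε″‖_e² with θ > 0, then the limit solution u is unique and the whole sequence (u_h)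 converges to u. -/
open Matrix Filter Topology MeasureTheory

/-- The norm on local strain space `ℝᵈ` induced by a (symmetric positive-definite)
matrix `M`: `‖x‖ = √(Mx·x)`. -/
noncomputable def matNorm {d : ℕ} (M : Matrix (Fin d) (Fin d) ℝ) (x : Fin d → ℝ) : ℝ :=
  Real.sqrt (M.mulVec x ⬝ᵥ x)

/-- The local phase-space norm on `Z_e = ℝᵈ × ℝᵈ`:
`‖(ε,σ)‖² = Mε·ε + M⁻¹σ·σ`. -/
noncomputable def phaseNorm {d : ℕ} (M : Matrix (Fin d) (Fin d) ℝ)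
    (y : (Fin d → ℝ) × (Fin d → ℝ)) : ℝ :=
  Real.sqrt (M.mulVec y.1 ⬝ᵥ y.1 + M⁻¹.mulVec y.2 ⬝ᵥ y.2)


theorem det_one_add_interp {E : Type*} [NormedAddCommGroup E] [NormedSpace ℝ E]
    [FiniteDimensional ℝ E] (A : E →L[ℝ] E)
    (v : Fin (Module.finrank ℝ E + 1) → ℝ) (hv : Function.Injective v) :
    (1 + A).det = ∑ i, (Lagrange.basis Finset.univ v i).eval 1 * (1 + v i • A).det := by
  classical
  let b := Module.finBasis ℝ E
  let M := LinearMap.toMatrix b b (A : E →ₗ[ℝ] E)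
  let P : Polynomial ℝ := Matrix.det ((Polynomial.X : Polynomial ℝ) • M.map Polynomial.C +
    (1 : Matrix _ _ ℝ).map Polynomial.C)
  have hP : ∀ s : ℝ, P.eval s = (1 + s • A).det := by
    intro s
    have h1 : (1 + s • A).det = (LinearMap.toMatrix b b ((1 + s • A : E →L[ℝ] E) : E →ₗ[ℝ] E)).det := by
      rw [LinearMap.det_toMatrix]
    have h2 : LinearMap.toMatrix b b ((1 + s • A : E →L[ℝ] E) : E →ₗ[ℝ] E) = s • M + 1 := by
      have : ((1 + s • A : E →L[ℝ] E) : E →ₗ[ℝ] E) = s • (A : E →ₗ[ℝ] E) + LinearMap.id := by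
        ext x; simp [add_comm]
      rw [this]
      simp [M]
    rw [h1, h2]
    simp only [P]
    rw [← Polynomial.coe_evalRingHom, RingHom.map_det]
    congr 1
    ext i j
    simp [Matrix.one_apply]
    split_ifs <;> simp [mul_comm]
  have hdeg : P.degree < (Finset.univ : Finset (Fin (Module.finrank ℝ E + 1))).card := by
    refine lt_of_le_of_lt Polynomial.degree_le_natDegree ?_
    have := Polynomial.natDegree_det_X_add_C_le M 1
    simp only [Fintype.card_fin, Finset.card_univ] at this ⊢
    exact_mod_cast Nat.lt_succ_of_le this
  have h3 := Lagrange.eq_interpolate (s := Finset.univ) (v := v) (f := P) hv.injOn hdeg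
  have h4 := congrArg (Polynomial.eval 1) h3
  rw [hP 1, one_smul] at h4
  rw [h4, Lagrange.interpolate_apply, Polynomial.eval_finsetSum]
  refine Finset.sum_congr rfl fun i _ => ?_
  simp [hP, mul_comm]

theorem exists_sphere_between {E : Type*} [NormedAddCommGroup E] [NormedSpace ℝ E]
    {r : ℝ} {x y : E} (hx : ‖x‖ ≤ r) (hy : r ≤ ‖y‖) :
    ∃ z, ‖z‖ = r ∧ ‖x - z‖ ≤ ‖x - y‖ := by
  have hc : ContinuousOn (fun s : ℝ => ‖x + s • (y - x)‖) (Set.Icc 0 1) := by fun_prop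
  have := intermediate_value_Icc (zero_le_one) hc
  obtain ⟨s, hs, hs'⟩ := this (show r ∈ _ by simpa using ⟨hx, hy⟩)
  refine ⟨_, hs', ?_⟩
  have : x - (x + s • (y - x)) = s • (x - y) := by
    rw [← neg_sub x y, smul_neg]; abel
  rw [this, norm_smul, Real.norm_of_nonneg hs.1]
  exact mul_le_of_le_one_left (norm_nonneg _) hs.2

theorem no_retraction {E : Type*} [NormedAddCommGroup E] [InnerProductSpace ℝ E]
    [FiniteDimensional ℝ E] [MeasurableSpace E] [BorelSpace E]
    (r : E → E)
    (p : ℝ) (hp : 0 < p) (hr : ContDiff ℝ 1 r) (hn : ∀ x, ‖r x‖ = p)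
    (hid : ∀ x, ‖x‖ = p → r x = x) : False := by
  classical
  let S : Set E := Metric.closedBall 0 p
  have hmemS : ∀ x : E, x ∈ S ↔ ‖x‖ ≤ p := fun x => by simp [S]
  let M : E → E →L[ℝ] E := fun x => fderiv ℝ r x - 1
  have hMc : Continuous M := (hr.continuous_fderiv (by norm_num)).sub continuous_const
  have hScomp : IsCompact S := isCompact_closedBall 0 p
  have hder : ∀ x, HasFDerivAt (fun x => r x - x) (M x) x := fun x =>
    ((hr.differentiable (by norm_num)) x).hasFDerivAt.sub (hasFDerivAt_id x)
  -- Lipschitz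
  obtain ⟨K, hK⟩ : ∃ K : ℝ, ∀ x ∈ S, ‖M x‖ ≤ K := hScomp.exists_bound_of_continuousOn hMc.continuousOn
  have hK0 : 0 ≤ K := (norm_nonneg _).trans (hK 0 ((hmemS 0).2 (by simpa using hp.le)))
  have hlipS : ∀ x ∈ S, ∀ y ∈ S, ‖(r x - x) - (r y - y)‖ ≤ K * ‖x - y‖ := by
    intro x hx y hy
    exact (convex_closedBall (0:E) p).norm_image_sub_le_of_norm_hasFDerivWithin_le
      (fun z _ => (hder z).hasFDerivWithinAt) hK hy hx
  let k : E → E := fun x => if ‖x‖ ≤ p then r x - x else 0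
  have hkS : ∀ x ∈ S, k x = r x - x := fun x hx => if_pos ((hmemS x).1 hx)
  have hkO : ∀ x, p ≤ ‖x‖ → k x = 0 := by
    intro x hx
    simp only [k]
    split_ifs with h
    · rw [hid x (le_antisymm h hx), sub_self]
    · rfl
  have hmix : ∀ x y : E, ‖x‖ ≤ p → p ≤ ‖y‖ → ‖k x - k y‖ ≤ K * ‖x - y‖ := by
    intro x y hx hy
    obtain ⟨z, hz, hxz⟩ := exists_sphere_between hx hy
    have h1 : k y = k z := by rw [hkO y hy, hkO z hz.ge]
    rw [h1, hkS x ((hmemS x).2 hx), hkS z ((hmemS z).2 hz.le)]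
    exact (hlipS x ((hmemS x).2 hx) z ((hmemS z).2 hz.le)).trans (by gcongr)
  have hlip : ∀ x y : E, ‖k x - k y‖ ≤ K * ‖x - y‖ := by
    intro x y
    rcases le_total ‖x‖ p with hx | hx <;> rcases le_total ‖y‖ p with hy | hy
    · rw [hkS x ((hmemS x).2 hx), hkS y ((hmemS y).2 hy)]
      exact hlipS x ((hmemS x).2 hx) y ((hmemS y).2 hy)
    · exact hmix x y hx hy
    · rw [norm_sub_rev, norm_sub_rev x y]; exact hmix y x hy hx
    · rw [hkO x hx, hkO y hy]; simp; positivity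
  -- determinant
  have hdetc : Continuous (fun q : ℝ × E => (1 + q.1 • M q.2).det) :=
    ContinuousLinearMap.continuous_det.comp (by fun_prop)
  have hev : ∀ᶠ s in 𝓝 (0:ℝ), ∀ x ∈ S, 0 < (1 + s • M x).det := by
    refine hScomp.eventually_forall_of_forall_eventually fun x _ => ?_
    refine hdetc.continuousAt.eventually (lt_mem_nhds ?_)
    simp [ContinuousLinearMap.det]
  have hev2 : ∀ᶠ s in 𝓝 (0:ℝ), s * K < 1 :=
    (((continuous_id.mul continuous_const).continuousAt (x := (0:ℝ))).eventually
      (gt_mem_nhds (by simp)))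
  have hev3 : ∀ᶠ s in 𝓝 (0:ℝ), s ≤ 1 := ge_mem_nhds one_pos
  obtain ⟨t0, ht0, hball⟩ := Metric.eventually_nhds_iff.1 ((hev.and hev2).and hev3)
  -- volume identity
  have hvol : ∀ s : ℝ, 0 ≤ s → s < t0 →
      ∫ x in S, (1 + s • M x).det = (volume : Measure E).real S := by
    intro s hs0 hst
    obtain ⟨⟨hpos, hsK⟩, hs1⟩ := hball (y := s) (by simpa [abs_of_nonneg hs0] using hst)
    let g : E → E := fun x => x + s • k x
    have happ : ApproximatesLinearOn g ((ContinuousLinearEquiv.refl ℝ E : E ≃L[ℝ] E) : E →L[ℝ] E)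
        Set.univ ⟨s * K, by positivity⟩ := by
      intro x _ y _
      have : g x - g y - ((ContinuousLinearEquiv.refl ℝ E : E ≃L[ℝ] E) : E →L[ℝ] E) (x - y)
          = s • (k x - k y) := by
        simp [g, smul_sub]; abel
      rw [this, norm_smul, Real.norm_of_nonneg hs0]
      have := mul_le_mul_of_nonneg_left (hlip x y) hs0
      rw [← mul_assoc] at this
      exact this
    have hcond : Subsingleton E ∨ (⟨s * K, by positivity⟩ : NNReal) <
        ‖((ContinuousLinearEquiv.refl ℝ E : E ≃L[ℝ] E).symm : E →L[ℝ] E)‖₊⁻¹ := by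
      rcases subsingleton_or_nontrivial E with h | h
      · exact Or.inl h
      · right
        have : ‖((ContinuousLinearEquiv.refl ℝ E : E ≃L[ℝ] E).symm : E →L[ℝ] E)‖₊ = 1 := by
          simp
        rw [this, inv_one]
        exact hsK
    have hsurj : Function.Surjective g := happ.surjective hcond
    have hinj : Set.InjOn g S := (happ.injOn hcond).mono (Set.subset_univ _)
    have himg : g '' S = S := by
      apply Set.Subset.antisymm
      · rintro _ ⟨x, hx, rfl⟩
        rw [hmemS]
        have : g x = (1 - s) • x + s • r x := by
          simp only [g]; rw [hkS x hx]; module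
        rw [this]
        refine (norm_add_le _ _).trans ?_
        rw [norm_smul, norm_smul, hn, Real.norm_of_nonneg hs0, Real.norm_of_nonneg (by linarith)]
        have := (hmemS x).1 hx
        nlinarith
      · intro y hy
        obtain ⟨x, rfl⟩ := hsurj y
        refine ⟨x, ?_, rfl⟩
        by_contra hx
        rw [hmemS, not_le] at hx
        have : g x = x := by simp [g, hkO x hx.le]
        rw [this] at hy
        exact absurd ((hmemS x).1 hy) (not_le.2 hx)
    have hgd : ∀ x ∈ S, HasFDerivWithinAt g (1 + s • M x) S x := by
      intro x hx
      have h1 : HasFDerivWithinAt (fun x => x + s • (r x - x)) (1 + s • M x) S x :=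
        ((hasFDerivAt_id x).add ((hder x).const_smul s)).hasFDerivWithinAt
      refine h1.congr (fun y hy => ?_) ?_
      · simp only [g]; rw [hkS y hy]
      · simp only [g]; rw [hkS x hx]
    have hcv := integral_image_eq_integral_abs_det_fderiv_smul (volume : Measure E)
      (measurableSet_closedBall) hgd hinj (fun _ => (1:ℝ))
    change ∫ x in g '' S, (1:ℝ) = _ at hcv
    rw [himg] at hcv
    simp only [integral_const, smul_eq_mul, mul_one] at hcv
    rw [show (volume : Measure E).real S = (volume.restrict S : Measure E).real Set.univ by
      simp [Measure.real]]
    rw [hcv]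
    refine setIntegral_congr_fun measurableSet_closedBall fun x hx => ?_
    exact (abs_of_pos (hpos x hx)).symm
  -- singular at 1
  have hzero : ∀ x, (1 + M x).det = 0 := by
    intro x
    have h1 : (1 + M x) = fderiv ℝ r x := by simp [M]
    rw [h1]
    by_contra hdet
    have hsur : Function.Surjective (fderiv ℝ r x) := by
      have : IsUnit (LinearMap.det ((fderiv ℝ r x : E →L[ℝ] E) : E →ₗ[ℝ] E)) :=
        isUnit_iff_ne_zero.2 hdet
      exact ((Module.End.isUnit_iff _).1 ((LinearMap.isUnit_iff_isUnit_det _).2 this)).2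
    obtain ⟨v, hv⟩ := hsur (r x)
    have hd := ((hr.differentiable (by norm_num)) x).hasFDerivAt
    have h2 := hd.norm_sq
    have h3 : HasFDerivAt (fun y => ‖r y‖ ^ 2) (0 : E →L[ℝ] ℝ) x := by
      simp only [hn]; exact hasFDerivAt_const _ _
    have h4 := congrArg (fun T : E →L[ℝ] ℝ => T v) (h2.unique h3)
    simp [hv, hn] at h4
    exact hp.ne' h4
  -- conclusion
  let v : Fin (Module.finrank ℝ E + 1) → ℝ := fun i => t0 * ((i : ℝ) / (Module.finrank ℝ E + 1))
  have hvinj : Function.Injective v := by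
    intro i j hij
    have h0 : ((Module.finrank ℝ E : ℝ) + 1) ≠ 0 := by positivity
    simp only [v] at hij
    field_simp at hij
    exact Fin.ext (by exact_mod_cast hij)
  have hvr : ∀ i, 0 ≤ v i ∧ v i < t0 := by
    intro i
    refine ⟨by positivity, ?_⟩
    have : ((i : ℕ) : ℝ) / (Module.finrank ℝ E + 1) < 1 := by
      rw [div_lt_one (by positivity)]
      exact_mod_cast i.2
    nlinarith
  have hIntg : ∀ s : ℝ, IntegrableOn (fun x => (1 + s • M x).det) S volume := fun s =>
    ((hdetc.comp (by fun_prop : Continuous fun x : E => (s, x))).continuousOn).integrableOn_compact hScomp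
  have h5 : ∫ x in S, (1 + M x).det = (volume : Measure E).real S := by
    have : ∀ x, (1 + M x).det = ∑ i, (Lagrange.basis Finset.univ v i).eval 1 * (1 + v i • M x).det :=
      fun x => det_one_add_interp (M x) v hvinj
    simp_rw [this]
    rw [integral_finsetSum _ (fun i _ => (hIntg (v i)).const_mul _)]
    simp_rw [integral_const_mul]
    rw [Finset.sum_congr rfl (fun i _ => by rw [hvol (v i) (hvr i).1 (hvr i).2])]
    rw [← Finset.sum_mul, ← Polynomial.eval_finsetSum, Lagrange.sum_basis hvinj.injOn Finset.univ_nonempty]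
    simp
  simp only [hzero, integral_zero] at h5
  have h6 : 0 < (volume : Measure E) S := Metric.measure_closedBall_pos _ _ hp
  have h7 : (volume : Measure E) S < ⊤ := hScomp.measure_lt_top
  exact absurd h5.symm (ENNReal.toReal_pos h6.ne' h7.ne).ne'

theorem exists_zero_of_coercive {E : Type*} [NormedAddCommGroup E] [InnerProductSpace ℝ E]
    [FiniteDimensional ℝ E] [MeasurableSpace E] [BorelSpace E]
    (F : E → E)
    (hF : ContDiff ℝ 1 F) (q : ℝ) (hq : 0 < q)
    (hpos : ∀ x, q ≤ ‖x‖ → 0 < inner ℝ (F x) x) : ∃ x, F x = 0 := by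
  by_contra! hne
  let χ : ContDiffBump (0 : E) := ⟨q, 2 * q, hq, by linarith⟩
  have hχ : ContDiff ℝ 1 (fun x => χ x) := χ.contDiff
  let G : E → E := fun x => χ x • F x + (1 - χ x) • x
  have hG : ContDiff ℝ 1 G := (hχ.smul hF).add ((contDiff_const.sub hχ).smul contDiff_id)
  have hGne : ∀ x, G x ≠ 0 := by
    intro x
    rcases le_total ‖x‖ q with hx | hx
    · have : χ x = 1 := χ.one_of_mem_closedBall (by simpa using hx)
      simpa [G, this] using hne x
    · intro h0
      have h1 : inner ℝ (G x) x = χ x * inner ℝ (F x) x + (1 - χ x) * ‖x‖ ^ 2 := by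
        simp only [G, inner_add_left, real_inner_smul_left, real_inner_self_eq_norm_sq]
      rw [h0, inner_zero_left] at h1
      have h2 := hpos x hx
      have h3 : 0 ≤ χ x := χ.nonneg
      have h4 : χ x ≤ 1 := χ.le_one
      have h5 : 0 < ‖x‖ ^ 2 := pow_pos (hq.trans_le hx) 2
      rcases h3.eq_or_lt with h | h
      · rw [← h] at h1; linarith
      · nlinarith [mul_pos h h2, mul_nonneg (sub_nonneg.2 h4) h5.le]
  refine no_retraction (fun x => (2 * q) • (‖G x‖⁻¹ • G x)) (2 * q) (by linarith) ?_ ?_ ?_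
  · exact contDiff_const.smul (((hG.norm ℝ hGne).inv (fun x => norm_ne_zero_iff.2 (hGne x))).smul hG)
  · intro x
    have := norm_ne_zero_iff.2 (hGne x)
    rw [norm_smul, norm_smul, norm_inv, norm_norm, inv_mul_cancel₀ this, Real.norm_of_nonneg (by linarith)]
    ring
  · intro x hx
    have h0 : χ x = 0 := χ.zero_of_le_dist (by simp [hx, χ])
    have h1 : G x = x := by simp [G, h0]
    simp only [h1, hx]
    rw [smul_smul, mul_inv_cancel₀ (by linarith), one_smul]

theorem abs_dot_le {d : ℕ} (x y : Fin d → ℝ) : |x ⬝ᵥ y| ≤ d * (‖x‖ * ‖y‖) := by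
  have : |x ⬝ᵥ y| ≤ ∑ i, |x i * y i| := Finset.abs_sum_le_sum_abs _ _
  refine this.trans ?_
  have h2 : ∀ i ∈ (Finset.univ : Finset (Fin d)), |x i * y i| ≤ ‖x‖ * ‖y‖ := by
    intro i _
    rw [abs_mul]
    exact mul_le_mul (norm_le_pi_norm x i) (norm_le_pi_norm y i) (abs_nonneg _) (norm_nonneg _)
  refine (Finset.sum_le_card_nsmul _ _ _ h2).trans ?_
  simp

open scoped MatrixOrder in
theorem matNorm_repr {d : ℕ} {M : Matrix (Fin d) (Fin d) ℝ} (hM : M.PosDef) :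
    ∃ T : (Fin d → ℝ) →ₗ[ℝ] EuclideanSpace ℝ (Fin d), LinearMap.ker T = ⊥ ∧
      ∀ x, matNorm M x = ‖T x‖ := by
  obtain ⟨N, rfl⟩ := CStarAlgebra.nonneg_iff_eq_star_mul_self.mp hM.posSemidef.nonneg
  let T : (Fin d → ℝ) →ₗ[ℝ] EuclideanSpace ℝ (Fin d) :=
    (WithLp.linearEquiv 2 ℝ (Fin d → ℝ)).symm.toLinearMap ∘ₗ N.mulVecLin
  have key : ∀ x, (star N * N).mulVec x ⬝ᵥ x = ‖T x‖ ^ 2 := by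
    intro x
    have h1 : (star N * N).mulVec x ⬝ᵥ x = N.mulVec x ⬝ᵥ N.mulVec x := by
      rw [← Matrix.mulVec_mulVec, Matrix.star_eq_conjTranspose, Matrix.conjTranspose_eq_transpose_of_trivial,
        Matrix.mulVec_transpose, ← Matrix.dotProduct_mulVec]
    rw [h1, EuclideanSpace.norm_sq_eq]
    simp [T, dotProduct, pow_two]
  refine ⟨T, ?_, fun x => ?_⟩
  · rw [LinearMap.ker_eq_bot']
    intro x hx
    by_contra hne
    have h := hM.dotProduct_mulVec_pos hne
    have h2 := key x
    rw [hx, dotProduct_comm] at h2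
    simp at h2 h
    rw [h2] at h
    exact lt_irrefl _ h
  · rw [matNorm, key, Real.sqrt_sq (norm_nonneg _)]

theorem matNorm_facts {d : ℕ} {M : Matrix (Fin d) (Fin d) ℝ} (hM : M.PosDef) :
    (∃ K : ℝ, 1 ≤ K ∧ (∀ x, ‖x‖ ≤ K * matNorm M x) ∧ (∀ x, matNorm M x ≤ K * ‖x‖)) ∧
    (∀ x y, matNorm M (x + y) ≤ matNorm M x + matNorm M y) ∧
    (∀ x y, matNorm M (x - y) = matNorm M (y - x)) ∧
    (∀ x, M.mulVec x ⬝ᵥ x = matNorm M x ^ 2) := by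
  obtain ⟨T, hT, hr⟩ := matNorm_repr hM
  obtain ⟨K1, -, hK1⟩ := T.exists_antilipschitzWith hT
  refine ⟨⟨max 1 (max K1 ‖T.toContinuousLinearMap‖), le_max_left _ _, fun x => ?_, fun x => ?_⟩,
    fun x y => ?_, fun x y => ?_, fun x => ?_⟩
  · rw [hr]
    have := hK1.le_mul_dist x 0
    simp only [map_zero, dist_zero_right] at this
    exact this.trans (mul_le_mul_of_nonneg_right ((le_max_left _ _).trans (le_max_right _ _)) (norm_nonneg _))
  · rw [hr]
    exact (T.toContinuousLinearMap.le_opNorm x).trans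
      (mul_le_mul_of_nonneg_right ((le_max_right _ _).trans (le_max_right _ _)) (norm_nonneg _))
  · simp only [hr, map_add]; exact norm_add_le _ _
  · simp only [hr, map_sub]; exact norm_sub_rev _ _
  · rw [matNorm, Real.sq_sqrt]
    have := hM.posSemidef.dotProduct_mulVec_nonneg x
    rw [dotProduct_comm]; simpa using this

theorem matNorm_nonneg {d : ℕ} (M : Matrix (Fin d) (Fin d) ℝ) (x) : 0 ≤ matNorm M x :=
  Real.sqrt_nonneg _

theorem matNorm_fst_le {d : ℕ} {M : Matrix (Fin d) (Fin d) ℝ} (hM : M.PosDef) (y) :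
    matNorm M y.1 ≤ phaseNorm M y := by
  refine Real.sqrt_le_sqrt ?_
  have := hM.inv.posSemidef.dotProduct_mulVec_nonneg y.2
  rw [dotProduct_comm] at this
  simp at this
  linarith

theorem matNorm_snd_le {d : ℕ} {M : Matrix (Fin d) (Fin d) ℝ} (hM : M.PosDef) (y) :
    matNorm M⁻¹ y.2 ≤ phaseNorm M y := by
  refine Real.sqrt_le_sqrt ?_
  have := hM.posSemidef.dotProduct_mulVec_nonneg y.1
  rw [dotProduct_comm] at this
  simp at this
  linarith

theorem elem_close {d : ℕ} {M : Matrix (Fin d) (Fin d) ℝ} (hM : M.PosDef)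
    (σ : (Fin d → ℝ) → (Fin d → ℝ))
    (L : ℝ → ℝ) (hLpos : ∀ R : ℝ, 0 < R → 0 < L R)
    (hLip : ∀ R : ℝ, 0 < R → ∀ (ε ε' : Fin d → ℝ),
      matNorm M ε < R → matNorm M ε' < R →
      matNorm M (σ ε - σ ε') ≤ L R * matNorm M (ε - ε'))
    (D : ℕ → Finset ((Fin d → ℝ) × (Fin d → ℝ)))
    (t ρ δ R : ℕ → ℝ)
    (ht0 : Tendsto t atTop (𝓝 0)) (hρ0 : Tendsto ρ atTop (𝓝 0))
    (hδ0 : Tendsto δ atTop (𝓝 0)) (hRinf : Tendsto R atTop atTop)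
    (hband : ∀ h, ∀ y ∈ D h, ∃ ξ : Fin d → ℝ, phaseNorm M (y - (ξ, σ ξ)) < t h)
    (hfine : ∀ h (ε : Fin d → ℝ), matNorm M ε ≤ 2 * R h →
      ∃ y ∈ D h, phaseNorm M ((ε, σ ε) - y) < ρ h)
    (hlim : Tendsto (fun h => L (2 * R h) * (t h + ρ h + δ h)) atTop (𝓝 0))
    (s : ℕ → (Fin d → ℝ) → (Fin d → ℝ))
    (hsnear : ∀ h (ε : Fin d → ℝ), matNorm M ε < R h →
      ∃ y ∈ D h, s h ε = y.2 ∧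
        ∀ y' ∈ D h, matNorm M (y.1 - ε) ≤ matNorm M (y'.1 - ε)) :
    ∃ γ : ℕ → ℝ, Tendsto γ atTop (𝓝 0) ∧ ∀ᶠ h in atTop, ∀ ε ε' : Fin d → ℝ,
      matNorm M ε' < R h → matNorm M (ε - ε') < δ h → ‖s h ε' - σ ε‖ ≤ γ h := by
  obtain ⟨⟨K, hK1, hK, -⟩, htri, hsymm, -⟩ := matNorm_facts hM
  obtain ⟨⟨K2, hK21, hK2, -⟩, -⟩ := matNorm_facts hM.inv
  refine ⟨fun h => K2 * t h + K * (L (2 * R h) * (t h + ρ h + δ h)), ?_, ?_⟩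
  · simpa using (ht0.const_mul K2).add (hlim.const_mul K)
  have q : (0:ℝ) < 1/4 := by norm_num
  filter_upwards [ht0.eventually (gt_mem_nhds q), hρ0.eventually (gt_mem_nhds q),
    hδ0.eventually (gt_mem_nhds q), hRinf.eventually_ge_atTop 1] with h h1 h2 h3 h4 ε ε' hε' hd
  obtain ⟨y, hyD, hsy, hymin⟩ := hsnear h ε' hε'
  obtain ⟨y', hy'D, hy'⟩ := hfine h ε' (by linarith)
  obtain ⟨ξ, hξ⟩ := hband h y hyD
  have e1 : matNorm M (y.1 - ξ) < t h := (matNorm_fst_le hM (y - (ξ, σ ξ))).trans_lt hξ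
  have e2 : matNorm M⁻¹ (y.2 - σ ξ) < t h := (matNorm_snd_le hM (y - (ξ, σ ξ))).trans_lt hξ
  have e3 : matNorm M (ε' - y'.1) < ρ h := (matNorm_fst_le hM ((ε', σ ε') - y')).trans_lt hy'
  have e4 : matNorm M (y.1 - ε') < ρ h := by
    rw [hsymm] at e3; exact (hymin y' hy'D).trans_lt e3
  have e5 : matNorm M (ξ - ε') < t h + ρ h := by
    have := htri (ξ - y.1) (y.1 - ε')
    rw [sub_add_sub_cancel, hsymm ξ y.1] at this
    linarith
  have e6 : matNorm M ξ < 2 * R h := by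
    have := htri (ξ - ε') ε'
    rw [sub_add_cancel] at this
    linarith
  have e7 : matNorm M ε < 2 * R h := by
    have := htri (ε - ε') ε'
    rw [sub_add_cancel] at this
    linarith
  have e8 : matNorm M (ξ - ε) ≤ t h + ρ h + δ h := by
    have := htri (ξ - ε') (ε' - ε)
    rw [sub_add_sub_cancel, hsymm ε' ε] at this
    linarith
  have hL := hLpos (2 * R h) (by linarith)
  have e9 := hLip (2 * R h) (by linarith) ξ ε e6 e7
  have e10 : matNorm M (σ ξ - σ ε) ≤ L (2 * R h) * (t h + ρ h + δ h) :=
    e9.trans (mul_le_mul_of_nonneg_left e8 hL.le)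
  calc ‖s h ε' - σ ε‖ = ‖(y.2 - σ ξ) + (σ ξ - σ ε)‖ := by rw [hsy, sub_add_sub_cancel]
    _ ≤ ‖y.2 - σ ξ‖ + ‖σ ξ - σ ε‖ := norm_add_le _ _
    _ ≤ K2 * t h + K * (L (2 * R h) * (t h + ρ h + δ h)) := by
      refine add_le_add ((hK2 _).trans ?_) ((hK _).trans ?_)
      · exact mul_le_mul_of_nonneg_left e2.le (by linarith)
      · exact mul_le_mul_of_nonneg_left e10 (by linarith)

theorem quad_lower {α β x : ℝ} (hα : 0 < α) : α / 2 * x ^ 2 - β ^ 2 / (2 * α) ≤ α * x ^ 2 - β * x := by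
  have : α * x ^ 2 - β * x - (α / 2 * x ^ 2 - β ^ 2 / (2 * α)) = (α * x - β) ^ 2 / (2 * α) := by
    field_simp; ring
  have h2 : 0 ≤ (α * x - β) ^ 2 / (2 * α) := by positivity
  linarith

theorem elem_coercive {d : ℕ} {M C : Matrix (Fin d) (Fin d) ℝ} (hM : M.PosDef) (hC : C.PosDef)
    (σ : (Fin d → ℝ) → (Fin d → ℝ)) (a b : ℝ) (ha : 0 < a) (hb : 0 ≤ b)
    (hmat : ∀ (ε : Fin d → ℝ), a * (M.mulVec ε ⬝ᵥ ε) - b ≤ σ ε ⬝ᵥ ε)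
    (δ R γ : ℕ → ℝ) (hδ0 : Tendsto δ atTop (𝓝 0)) (hγ : Tendsto γ atTop (𝓝 0))
    (s : ℕ → (Fin d → ℝ) → (Fin d → ℝ))
    (hclose : ∀ᶠ h in atTop, ∀ ε ε' : Fin d → ℝ,
      matNorm M ε' < R h → matNorm M (ε - ε') < δ h → ‖s h ε' - σ ε‖ ≤ γ h)
    (hsfar : ∀ h (ε : Fin d → ℝ), R h ≤ matNorm M ε → s h ε = C.mulVec ε) :
    ∃ α β : ℝ, 0 < α ∧ 0 ≤ β ∧ ∀ᶠ h in atTop, ∀ ε ε' : Fin d → ℝ,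
      matNorm M (ε - ε') < δ h → α * ‖ε‖ ^ 2 - β ≤ s h ε' ⬝ᵥ ε := by
  obtain ⟨⟨K, hK1, hK, -⟩, -, hsymm, hsq⟩ := matNorm_facts hM
  obtain ⟨⟨K2, hK21, hK2, -⟩, -, -, hsqC⟩ := matNorm_facts hC
  set α0 : ℝ := min (a / K ^ 2) (1 / K2 ^ 2) with hα0
  have hαz_pos : 0 < α0 := lt_min (by positivity) (by positivity)
  let T : (Fin d → ℝ) →L[ℝ] (Fin d → ℝ) := (C.mulVecLin).toContinuousLinearMap
  have hT : ∀ x, ‖C.mulVec x‖ ≤ ‖T‖ * ‖x‖ := fun x => T.le_opNorm x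
  set β0 : ℝ := max (d : ℝ) (d * (‖T‖ * K)) with hβ0
  have hβz_nn : 0 ≤ β0 := le_max_of_le_left (by positivity)
  refine ⟨α0 / 2, β0 ^ 2 / (2 * α0) + b, by positivity, by positivity, ?_⟩
  have main : ∀ ε : Fin d → ℝ, α0 / 2 * ‖ε‖ ^ 2 - (β0 ^ 2 / (2 * α0) + b) ≤
      α0 * ‖ε‖ ^ 2 - β0 * ‖ε‖ - b := by
    intro ε
    have := quad_lower (β := β0) (x := ‖ε‖) hαz_pos
    linarith
  filter_upwards [hclose, hδ0.eventually (gt_mem_nhds one_pos), hγ.eventually (gt_mem_nhds one_pos)]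
    with h hcl hδ1 hγ1 ε ε' hd
  refine (main ε).trans ?_
  rcases lt_or_ge (matNorm M ε') (R h) with hlt | hge
  · have h1 := hcl ε ε' hlt hd
    have h2 : s h ε' ⬝ᵥ ε = σ ε ⬝ᵥ ε + (s h ε' - σ ε) ⬝ᵥ ε := by
      rw [← add_dotProduct, add_sub_cancel]
    have h3 := (abs_le.1 (abs_dot_le (s h ε' - σ ε) ε)).1
    have h4 : (d:ℝ) * (‖s h ε' - σ ε‖ * ‖ε‖) ≤ β0 * ‖ε‖ := by
      have : ‖s h ε' - σ ε‖ * ‖ε‖ ≤ 1 * ‖ε‖ := mul_le_mul_of_nonneg_right (by linarith) (norm_nonneg _)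
      calc (d:ℝ) * (‖s h ε' - σ ε‖ * ‖ε‖) ≤ d * (1 * ‖ε‖) := mul_le_mul_of_nonneg_left this (by positivity)
        _ = d * ‖ε‖ := by ring
        _ ≤ β0 * ‖ε‖ := mul_le_mul_of_nonneg_right (le_max_left _ _) (norm_nonneg _)
    have h5 := hmat ε
    rw [hsq] at h5
    have h6 : α0 * ‖ε‖ ^ 2 ≤ a * matNorm M ε ^ 2 := by
      have h7 : ‖ε‖ ^ 2 ≤ K ^ 2 * matNorm M ε ^ 2 := by
        rw [← mul_pow]; exact pow_le_pow_left₀ (norm_nonneg _) (hK ε) 2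
      calc α0 * ‖ε‖ ^ 2 ≤ a / K ^ 2 * ‖ε‖ ^ 2 := mul_le_mul_of_nonneg_right (min_le_left _ _) (by positivity)
        _ ≤ a / K ^ 2 * (K ^ 2 * matNorm M ε ^ 2) := mul_le_mul_of_nonneg_left h7 (by positivity)
        _ = a * matNorm M ε ^ 2 := by field_simp
    linarith
  · rw [hsfar h ε' hge]
    have h2 : C.mulVec ε' ⬝ᵥ ε = C.mulVec ε ⬝ᵥ ε + C.mulVec (ε' - ε) ⬝ᵥ ε := by
      rw [← add_dotProduct, ← Matrix.mulVec_add, add_sub_cancel]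
    have h3 := (abs_le.1 (abs_dot_le (C.mulVec (ε' - ε)) ε)).1
    have h8 : ‖C.mulVec (ε' - ε)‖ ≤ ‖T‖ * K := by
      refine (hT _).trans (mul_le_mul_of_nonneg_left ?_ (norm_nonneg _))
      refine (hK _).trans ?_
      rw [hsymm]
      nlinarith
    have h4 : (d:ℝ) * (‖C.mulVec (ε' - ε)‖ * ‖ε‖) ≤ β0 * ‖ε‖ := by
      calc (d:ℝ) * (‖C.mulVec (ε' - ε)‖ * ‖ε‖) ≤ d * (‖T‖ * K * ‖ε‖) := by gcongr
        _ = d * (‖T‖ * K) * ‖ε‖ := by ring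
        _ ≤ β0 * ‖ε‖ := mul_le_mul_of_nonneg_right (le_max_right _ _) (norm_nonneg _)
    have h6 : α0 * ‖ε‖ ^ 2 ≤ matNorm C ε ^ 2 := by
      have h7 : ‖ε‖ ^ 2 ≤ K2 ^ 2 * matNorm C ε ^ 2 := by
        rw [← mul_pow]; exact pow_le_pow_left₀ (norm_nonneg _) (hK2 ε) 2
      calc α0 * ‖ε‖ ^ 2 ≤ 1 / K2 ^ 2 * ‖ε‖ ^ 2 := mul_le_mul_of_nonneg_right (min_le_right _ _) (by positivity)
        _ ≤ 1 / K2 ^ 2 * (K2 ^ 2 * matNorm C ε ^ 2) := mul_le_mul_of_nonneg_left h7 (by positivity)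
        _ = matNorm C ε ^ 2 := by field_simp
    rw [h2, hsqC]
    linarith

theorem elem_mollify {d : ℕ} {M C : Matrix (Fin d) (Fin d) ℝ} (hM : M.PosDef)
    (D : Finset ((Fin d → ℝ) × (Fin d → ℝ))) (δ R : ℝ)
    (s : (Fin d → ℝ) → (Fin d → ℝ)) (hsmeas : Measurable s)
    (hsnear : ∀ (ε : Fin d → ℝ), matNorm M ε < R → ∃ y ∈ D, s ε = y.2)
    (hsfar : ∀ (ε : Fin d → ℝ), R ≤ matNorm M ε → s ε = C.mulVec ε)
    (ψ : (Fin d → ℝ) → ℝ)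
    (hψsmooth : ContDiff ℝ (⊤ : ℕ∞) ψ)
    (hψsupp : ∀ (x : Fin d → ℝ), ψ x ≠ 0 → matNorm M x < δ)
    (hψnonneg : ∀ (x : Fin d → ℝ), 0 ≤ ψ x)
    (hψint : ∫ x : Fin d → ℝ, ψ x = 1) :
    ContDiff ℝ 1 (fun ε => ∫ x : Fin d → ℝ, ψ x • s (ε - x)) ∧
    (∀ ε κ, (∀ ε', matNorm M (ε - ε') < δ → κ ≤ s ε' ⬝ᵥ ε) →
      κ ≤ (∫ x : Fin d → ℝ, ψ x • s (ε - x)) ⬝ᵥ ε) ∧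
    (∀ ε z γ, (∀ ε', matNorm M (ε - ε') < δ → ‖s ε' - z‖ ≤ γ) →
      ‖(∫ x : Fin d → ℝ, ψ x • s (ε - x)) - z‖ ≤ γ) := by
  obtain ⟨⟨K, hK1, hK, -⟩, -, -, -⟩ := matNorm_facts hM
  have hcs : HasCompactSupport ψ := by
    refine HasCompactSupport.intro (isCompact_closedBall (0 : Fin d → ℝ) (K * δ)) fun x hx => ?_
    by_contra hne
    apply hx
    rw [mem_closedBall_zero_iff]
    exact (hK x).trans (mul_le_mul_of_nonneg_left (hψsupp x hne).le (by linarith))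
  have hloc : LocallyIntegrable s (volume : Measure (Fin d → ℝ)) := by
    have hg : Continuous fun ε : Fin d → ℝ => (∑ y ∈ D, ‖y.2‖) + ‖C.mulVec ε‖ := by
      have : Continuous fun ε : Fin d → ℝ => C.mulVec ε := C.mulVecLin.continuous_of_finiteDimensional
      fun_prop
    refine hg.locallyIntegrable.mono hsmeas.aestronglyMeasurable (Eventually.of_forall fun ε => ?_)
    have hS : 0 ≤ ∑ y ∈ D, ‖y.2‖ := Finset.sum_nonneg fun _ _ => norm_nonneg _
    rw [Real.norm_of_nonneg (by positivity)]
    rcases lt_or_ge (matNorm M ε) R with h | h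
    · obtain ⟨y, hy, hys⟩ := hsnear ε h
      rw [hys]
      have := Finset.single_le_sum (f := fun y : (Fin d → ℝ) × (Fin d → ℝ) => ‖y.2‖)
        (fun _ _ => norm_nonneg _) hy
      have h2 := norm_nonneg (C.mulVec ε)
      linarith
    · rw [hsfar ε h]; linarith
  have hIntg : ∀ ε, Integrable (fun x => ψ x • s (ε - x)) := fun ε =>
    (hcs.convolutionExists_left (ContinuousLinearMap.lsmul ℝ ℝ) hψsmooth.continuous hloc ε)
  have hψi : Integrable ψ := hψsmooth.continuous.integrable_of_hasCompactSupport hcs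
  refine ⟨?_, ?_, ?_⟩
  · have := hcs.contDiff_convolution_left (n := 1) (μ := volume) (ContinuousLinearMap.lsmul ℝ ℝ)
      (hψsmooth.of_le (by exact_mod_cast le_top)) hloc
    exact this
  · intro ε κ hκ
    let l : (Fin d → ℝ) →L[ℝ] ℝ := LinearMap.toContinuousLinearMap
      { toFun := fun z => z ⬝ᵥ ε, map_add' := fun x y => add_dotProduct x y ε,
        map_smul' := fun c x => smul_dotProduct c x ε }
    have h1 : (∫ x : Fin d → ℝ, ψ x • s (ε - x)) ⬝ᵥ ε = ∫ x, ψ x * (s (ε - x) ⬝ᵥ ε) := by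
      have := l.integral_comp_comm (hIntg ε)
      rw [show (∫ x : Fin d → ℝ, ψ x • s (ε - x)) ⬝ᵥ ε = l (∫ x : Fin d → ℝ, ψ x • s (ε - x)) from rfl,
        ← this]
      refine integral_congr_ae (Eventually.of_forall fun x => ?_)
      exact smul_dotProduct (ψ x) (s (ε - x)) ε
    have h2 : Integrable fun x => ψ x * (s (ε - x) ⬝ᵥ ε) := by
      refine (l.integrable_comp (hIntg ε)).congr (Eventually.of_forall fun x => ?_)
      exact smul_dotProduct (ψ x) (s (ε - x)) ε
    rw [h1]
    calc κ = ∫ x, ψ x * κ := by rw [integral_mul_const, hψint, one_mul]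
      _ ≤ _ := by
        refine integral_mono (hψi.mul_const κ) h2 fun x => ?_
        by_cases hx : ψ x = 0
        · simp [hx]
        · exact mul_le_mul_of_nonneg_left (hκ _ (by simpa using hψsupp x hx)) (hψnonneg x)
  · intro ε z γ hγ
    have h1 : (∫ x : Fin d → ℝ, ψ x • s (ε - x)) - z = ∫ x, ψ x • (s (ε - x) - z) := by
      simp_rw [smul_sub]
      rw [integral_sub (hIntg ε) (hψi.smul_const z), integral_smul_const, hψint, one_smul]
    rw [h1]
    calc _ ≤ ∫ x, ψ x * γ := by
          refine norm_integral_le_of_norm_le (hψi.mul_const γ) (Eventually.of_forall fun x => ?_)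
          rw [norm_smul, Real.norm_of_nonneg (hψnonneg x)]
          by_cases hx : ψ x = 0
          · simp [hx]
          · exact mul_le_mul_of_nonneg_left (hγ _ (by simpa using hψsupp x hx)) (hψnonneg x)
      _ = γ := by rw [integral_mul_const, hψint, one_mul]

/-- **Uniform approximation by point data.** If the data sets `D_{e,h}` approximate the
graph `G_e` of the material law `σ̂_e` uniformly (within `t_h`), finely (within `ρ_h` up
to strains of size `2R_h`) and `L_{2R_h}(t_h + ρ_h + δ_h) → 0`, then for sufficiently
large `h` the displacement problem for the mollified nearest-neighbour effective law
`σ̂_{e,h} = ψ_{δ_h} ∗ s_{e,h}` has a solution `u_h`; a subsequence of any such sequence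
of solutions converges to a solution `u` of the limiting problem, and under strict
monotonicity the limiting solution is unique and the whole sequence converges to it. -/
theorem uniform_approximation_by_point_data (m d n : ℕ)
    (w : Fin m → ℝ) (hw : ∀ e, 0 < w e)
    (𝔹 : Fin m → Matrix (Fin d) (Fin d) ℝ) (h𝔹 : ∀ e, (𝔹 e).PosDef)
    (σ : Fin m → (Fin d → ℝ) → (Fin d → ℝ)) (hσ : ∀ e, Continuous (σ e))
    (a b : ℝ) (ha : 0 < a) (hb : 0 ≤ b)
    (hmat : ∀ e (ε : Fin d → ℝ), a * ((𝔹 e).mulVec ε ⬝ᵥ ε) - b ≤ σ e ε ⬝ᵥ ε)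
    (L : ℝ → ℝ) (hLpos : ∀ R : ℝ, 0 < R → 0 < L R)
    (hLip : ∀ R : ℝ, 0 < R → ∀ e (ε ε' : Fin d → ℝ),
      matNorm (𝔹 e) ε < R → matNorm (𝔹 e) ε' < R →
      matNorm (𝔹 e) (σ e ε - σ e ε') ≤ L R * matNorm (𝔹 e) (ε - ε'))
    (B : Fin m → (Fin n → ℝ) →ₗ[ℝ] (Fin d → ℝ))
    (c : ℝ) (hc : 0 < c)
    (hstruct : ∀ u : Fin n → ℝ,
      u ⬝ᵥ u ≤ c * ∑ e, w e * ((𝔹 e).mulVec (B e u) ⬝ᵥ (B e u)))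
    (D : Fin m → ℕ → Finset ((Fin d → ℝ) × (Fin d → ℝ)))
    (hD : ∀ e h, (D e h).Nonempty)
    (t ρ δ R : ℕ → ℝ)
    (ht0 : Tendsto t atTop (𝓝 0)) (hρ0 : Tendsto ρ atTop (𝓝 0))
    (hδ0 : Tendsto δ atTop (𝓝 0)) (hRinf : Tendsto R atTop atTop)
    -- (1) every data point lies within `t_h` of the graph `G_e`
    (hband : ∀ e h, ∀ y ∈ D e h, ∃ ξ : Fin d → ℝ,
      phaseNorm (𝔹 e) (y - (ξ, σ e ξ)) < t h)
    -- (2) fine approximation of the graph up to strains of size `2R_h`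
    (hfine : ∀ e h (ε : Fin d → ℝ), matNorm (𝔹 e) ε ≤ 2 * R h →
      ∃ y ∈ D e h, phaseNorm (𝔹 e) ((ε, σ e ε) - y) < ρ h)
    -- (3)
    (hlim : Tendsto (fun h => L (2 * R h) * (t h + ρ h + δ h)) atTop (𝓝 0))
    -- the unregularized nearest-neighbour law `s_{e,h}` with linear extrapolation
    (Cm : Fin m → Matrix (Fin d) (Fin d) ℝ) (hCm : ∀ e, (Cm e).PosDef)
    (s : Fin m → ℕ → (Fin d → ℝ) → (Fin d → ℝ))
    (hsmeas : ∀ e h, Measurable (s e h))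
    (hsnear : ∀ e h (ε : Fin d → ℝ), matNorm (𝔹 e) ε < R h →
      ∃ y ∈ D e h, s e h ε = y.2 ∧
        ∀ y' ∈ D e h, matNorm (𝔹 e) (y.1 - ε) ≤ matNorm (𝔹 e) (y'.1 - ε))
    (hsfar : ∀ e h (ε : Fin d → ℝ), R h ≤ matNorm (𝔹 e) ε →
      s e h ε = (Cm e).mulVec ε)
    -- the mollification kernels `ψ_{δ_h} ∈ C_c^∞(B_{δ_h};[0,∞))`, even, of unit integral
    (ψ : Fin m → ℕ → (Fin d → ℝ) → ℝ)
    (hψsmooth : ∀ e h, ContDiff ℝ (⊤ : ℕ∞) (ψ e h))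
    (hψsupp : ∀ e h (x : Fin d → ℝ), ψ e h x ≠ 0 → matNorm (𝔹 e) x < δ h)
    (hψnonneg : ∀ e h (x : Fin d → ℝ), 0 ≤ ψ e h x)
    (hψeven : ∀ e h (x : Fin d → ℝ), ψ e h (-x) = ψ e h x)
    (hψint : ∀ e h, ∫ x : Fin d → ℝ, ψ e h x = 1)
    (f : Fin n → ℝ) :
    ∃ H : ℕ,
      (∀ h, H ≤ h → ∃ u : Fin n → ℝ, ∀ v : Fin n → ℝ,
        ∑ e, w e * ((∫ x : Fin d → ℝ, ψ e h x • s e h (B e u - x)) ⬝ᵥ (B e v)) =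
          f ⬝ᵥ v) ∧
      ∀ u : ℕ → Fin n → ℝ,
        (∀ h, H ≤ h → ∀ v : Fin n → ℝ,
          ∑ e, w e * ((∫ x : Fin d → ℝ, ψ e h x • s e h (B e (u h) - x)) ⬝ᵥ (B e v)) =
            f ⬝ᵥ v) →
        (∃ φ : ℕ → ℕ, StrictMono φ ∧ ∃ ustar : Fin n → ℝ,
          Tendsto (u ∘ φ) atTop (𝓝 ustar) ∧
          ∀ v : Fin n → ℝ,
            ∑ e, w e * (σ e (B e ustar) ⬝ᵥ (B e v)) = f ⬝ᵥ v) ∧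
        (∀ θ : ℝ, 0 < θ →
          (∀ e (ε' ε'' : Fin d → ℝ),
            θ * ((𝔹 e).mulVec (ε' - ε'') ⬝ᵥ (ε' - ε'')) ≤
              (σ e ε' - σ e ε'') ⬝ᵥ (ε' - ε'')) →
          ∃ ustar : Fin n → ℝ,
            (∀ v : Fin n → ℝ,
              ∑ e, w e * (σ e (B e ustar) ⬝ᵥ (B e v)) = f ⬝ᵥ v) ∧
            (∀ u' : Fin n → ℝ,
              (∀ v : Fin n → ℝ,
                ∑ e, w e * (σ e (B e u') ⬝ᵥ (B e v)) = f ⬝ᵥ v) → u' = ustar) ∧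
            Tendsto u atTop (𝓝 ustar)) := by
  classical
  have hfacts := fun e => matNorm_facts (h𝔹 e)
  choose γ hγ hclose using fun e => elem_close (h𝔹 e) (σ e) L hLpos (fun R hR => hLip R hR e)
    (D e) t ρ δ R ht0 hρ0 hδ0 hRinf (hband e) (hfine e) hlim (s e) (hsnear e)
  choose α β hα hβ hcoer using fun e => elem_coercive (h𝔹 e) (hCm e) (σ e) a b ha hb (hmat e)
    δ R (γ e) hδ0 (hγ e) (s e) (hclose e) (hsfar e)
  have mol := fun e h => elem_mollify (C := Cm e) (h𝔹 e) (D e h) (δ h) (R h) (s e h) (hsmeas e h)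
    (fun ε hε => by
      obtain ⟨y, hy, hys, -⟩ := hsnear e h ε hε
      exact ⟨y, hy, hys⟩) (hsfar e h) (ψ e h) (hψsmooth e h) (hψsupp e h) (hψnonneg e h) (hψint e h)
  let S : Fin m → ℕ → (Fin d → ℝ) → (Fin d → ℝ) := fun e h ε => ∫ x : Fin d → ℝ, ψ e h x • s e h (ε - x)
  have hScd : ∀ e h, ContDiff ℝ 1 (S e h) := fun e h => (mol e h).1
  have hScoer : ∀ᶠ h in atTop, ∀ e ε, α e * ‖ε‖ ^ 2 - β e ≤ S e h ε ⬝ᵥ ε := by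
    refine eventually_all.2 fun e => ?_
    filter_upwards [hcoer e] with h hh ε
    exact (mol e h).2.1 ε _ (hh ε)
  have hSclose : ∀ e, ∀ᶠ h in atTop, ∀ ε, matNorm (𝔹 e) ε + δ h < R h → ‖S e h ε - σ e ε‖ ≤ γ e h := by
    intro e
    filter_upwards [hclose e] with h hh ε hε
    refine (mol e h).2.2 ε _ _ fun ε' hε' => hh ε ε' ?_ hε'
    obtain ⟨-, htri, hsymm, -⟩ := hfacts e
    have h1 := htri ε (ε' - ε)
    rw [add_sub_cancel, hsymm ε' ε] at h1
    linarith
  -- uniform coercivity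
  obtain ⟨κ, hκ, hκu⟩ : ∃ κ : ℝ, 0 < κ ∧ ∀ u : Fin n → ℝ,
      κ * (u ⬝ᵥ u) ≤ ∑ e, w e * (α e * ‖B e u‖ ^ 2) := by
    choose K hK1 hK hK' using fun e => (hfacts e).1
    set Q : ℝ := ∑ e, K e ^ 2 / α e + 1 with hQ
    have hterm : ∀ e, 0 ≤ K e ^ 2 / α e := fun e => div_nonneg (sq_nonneg _) (hα e).le
    have hQpos : 0 < Q := by
      have : 0 ≤ ∑ e, K e ^ 2 / α e := Finset.sum_nonneg fun e _ => hterm e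
      linarith
    have hKQ : ∀ e, K e ^ 2 ≤ Q * α e := by
      intro e
      rw [← div_le_iff₀ (hα e)]
      have := Finset.single_le_sum (f := fun e => K e ^ 2 / α e) (fun e _ => hterm e) (Finset.mem_univ e)
      linarith
    refine ⟨(c * Q)⁻¹, by positivity, fun u => ?_⟩
    rw [inv_mul_le_iff₀ (by positivity), mul_assoc]
    refine (hstruct u).trans (mul_le_mul_of_nonneg_left ?_ hc.le)
    rw [Finset.mul_sum]
    refine Finset.sum_le_sum fun e _ => ?_
    rw [(hfacts e).2.2.2]
    have h1 : matNorm (𝔹 e) (B e u) ^ 2 ≤ K e ^ 2 * ‖B e u‖ ^ 2 := by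
      rw [← mul_pow]; exact pow_le_pow_left₀ (matNorm_nonneg _ _) (hK' e _) 2
    have h2 : K e ^ 2 * ‖B e u‖ ^ 2 ≤ Q * α e * ‖B e u‖ ^ 2 :=
      mul_le_mul_of_nonneg_right (hKQ e) (sq_nonneg _)
    calc w e * matNorm (𝔹 e) (B e u) ^ 2 ≤ w e * (Q * α e * ‖B e u‖ ^ 2) :=
          mul_le_mul_of_nonneg_left (h1.trans h2) (hw e).le
      _ = _ := by ring
  have hdot : ∀ x y : Fin n → ℝ, x ⬝ᵥ y = inner ℝ (WithLp.toLp 2 x) (WithLp.toLp 2 y) := by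
    intro x y
    rw [EuclideanSpace.inner_eq_star_dotProduct]
    simp [dotProduct_comm]
  set G : ℝ := ‖WithLp.toLp 2 f‖ ^ 2 / (2 * κ) + ∑ e, w e * β e with hG
  have hG0 : 0 ≤ G := add_nonneg (by positivity)
    (Finset.sum_nonneg fun e _ => mul_nonneg (hw e).le (hβ e))
  set r : ℝ := 2 * G / κ + 1 with hr
  have hr1 : 1 ≤ r := by
    have : 0 ≤ 2 * G / κ := by positivity
    linarith
  have hP : ∀ᶠ h in atTop, ∀ u : Fin n → ℝ, r ≤ ‖WithLp.toLp 2 u‖ →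
      0 < ∑ e, w e * (S e h (B e u) ⬝ᵥ B e u) - f ⬝ᵥ u := by
    filter_upwards [hScoer] with h hh u hu
    have h1 : ∑ e, w e * (α e * ‖B e u‖ ^ 2) - ∑ e, w e * β e ≤
        ∑ e, w e * (S e h (B e u) ⬝ᵥ B e u) := by
      rw [← Finset.sum_sub_distrib]
      refine Finset.sum_le_sum fun e _ => ?_
      rw [← mul_sub]
      exact mul_le_mul_of_nonneg_left (hh e _) (hw e).le
    have h2 := hκu u
    rw [hdot u u, real_inner_self_eq_norm_sq] at h2
    have h3 : f ⬝ᵥ u ≤ ‖WithLp.toLp 2 f‖ * ‖WithLp.toLp 2 u‖ := by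
      rw [hdot]; exact real_inner_le_norm _ _
    have h4 := quad_lower (β := ‖WithLp.toLp 2 f‖) (x := ‖WithLp.toLp 2 u‖) hκ
    have h5 : 2 * G / κ < ‖WithLp.toLp 2 u‖ ^ 2 := by nlinarith
    rw [div_lt_iff₀ hκ] at h5
    linarith
  obtain ⟨H, hH⟩ := eventually_atTop.1 hP
  refine ⟨H, fun h hh => ?_, fun u hu => ?_⟩
  · -- existence
    let l : (Fin n → ℝ) → (Fin n → ℝ) →ₗ[ℝ] ℝ := fun u =>
      { toFun := fun v => ∑ e, w e * (S e h (B e u) ⬝ᵥ B e v) - f ⬝ᵥ v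
        map_add' := fun x y => by
          simp only [map_add, dotProduct_add, mul_add, Finset.sum_add_distrib]; ring
        map_smul' := fun c x => by
          simp only [map_smul, dotProduct_smul, smul_eq_mul, RingHom.id_apply, mul_sub, Finset.mul_sum]
          congr 1
          exact Finset.sum_congr rfl fun e _ => by ring }
    let F : EuclideanSpace ℝ (Fin n) → EuclideanSpace ℝ (Fin n) := fun x =>
      WithLp.toLp 2 fun i => l (WithLp.ofLp x) (Pi.single i 1)
    have hFin : ∀ x (v : Fin n → ℝ), (WithLp.ofLp (F x)) ⬝ᵥ v = l (WithLp.ofLp x) v := by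
      intro x v
      rw [LinearMap.pi_apply_eq_sum_univ (l (WithLp.ofLp x)) v]
      simp only [F, dotProduct, smul_eq_mul]
      refine Finset.sum_congr rfl fun i _ => ?_
      rw [mul_comm]
      congr 2
      ext j
      simp [Pi.single_apply, eq_comm]
    have hFc : ContDiff ℝ 1 F := by
      rw [contDiff_euclidean]
      intro i
      change ContDiff ℝ 1 fun x : EuclideanSpace ℝ (Fin n) =>
        ∑ e, w e * (∑ j, S e h (B e (WithLp.ofLp x)) j * B e (Pi.single i 1) j) - f ⬝ᵥ Pi.single i 1
      refine ContDiff.sub (ContDiff.sum fun e _ => contDiff_const.mul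
        (ContDiff.sum fun j _ => ContDiff.mul ?_ contDiff_const)) contDiff_const
      have hB : ContDiff ℝ 1 fun x : EuclideanSpace ℝ (Fin n) => B e (WithLp.ofLp x) :=
        ((B e ∘ₗ (WithLp.linearEquiv 2 ℝ (Fin n → ℝ)).toLinearMap).toContinuousLinearMap).contDiff
      exact contDiff_pi.1 ((hScd e h).comp hB) j
    obtain ⟨x, hx⟩ := exists_zero_of_coercive F hFc r (by linarith) (by
      intro x hx
      have h1 := hFin x (WithLp.ofLp x)
      rw [hdot] at h1
      have h2 : inner ℝ (F x) x = l (WithLp.ofLp x) (WithLp.ofLp x) := h1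
      rw [h2]
      exact hH h hh (WithLp.ofLp x) hx)
    refine ⟨WithLp.ofLp x, fun v => ?_⟩
    have h1 := hFin x v
    rw [hx] at h1
    have h2 : l (WithLp.ofLp x) v = 0 := by rw [← h1]; simp
    exact sub_eq_zero.1 h2
  · have hbd : ∀ h, H ≤ h → u h ∈ Metric.closedBall (0 : Fin n → ℝ) r := by
      intro h hh
      have h1 : ‖WithLp.toLp 2 (u h)‖ < r := by
        by_contra hcon
        have h2 := hH h hh (u h) (not_lt.1 hcon)
        have h3 : ∑ e, w e * (S e h (B e (u h)) ⬝ᵥ B e (u h)) = f ⬝ᵥ u h := hu h hh (u h)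
        rw [h3, sub_self] at h2
        exact lt_irrefl _ h2
      rw [mem_closedBall_zero_iff, pi_norm_le_iff_of_nonneg (by linarith)]
      intro i
      exact (PiLp.norm_apply_le (WithLp.toLp 2 (u h)) i).trans h1.le
    have hBc : ∀ e, Continuous (B e) := fun e => (B e).continuous_of_finiteDimensional
    have hlimsol : ∀ φ : ℕ → ℕ, Tendsto φ atTop atTop → ∀ ustar : Fin n → ℝ,
        Tendsto (u ∘ φ) atTop (𝓝 ustar) →
        ∀ v : Fin n → ℝ, ∑ e, w e * (σ e (B e ustar) ⬝ᵥ (B e v)) = f ⬝ᵥ v := by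
      intro φ hφ ustar hus v
      have hconv : ∀ e, Tendsto (fun k => S e (φ k) (B e (u (φ k)))) atTop (𝓝 (σ e (B e ustar))) := by
        intro e
        have hBu : Tendsto (fun k => B e (u (φ k))) atTop (𝓝 (B e ustar)) :=
          ((hBc e).tendsto ustar).comp hus
        have hσu : Tendsto (fun k => σ e (B e (u (φ k)))) atTop (𝓝 (σ e (B e ustar))) :=
          ((hσ e).tendsto _).comp hBu
        have hdiff : Tendsto (fun k => S e (φ k) (B e (u (φ k))) - σ e (B e (u (φ k)))) atTop (𝓝 0) := by
          refine squeeze_zero_norm' ?_ ((hγ e).comp hφ)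
          obtain ⟨⟨K, hK1, -, hK⟩, -⟩ := hfacts e
          filter_upwards [hφ.eventually (hSclose e), hBu.norm.eventually (gt_mem_nhds (lt_add_one _)),
            hφ.eventually (hδ0.eventually (gt_mem_nhds one_pos)),
            hφ.eventually (hRinf.eventually_ge_atTop (K * (‖B e ustar‖ + 1) + 1))] with k k1 k2 k3 k4
          refine k1 _ ?_
          have := hK (B e (u (φ k)))
          have := mul_le_mul_of_nonneg_left k2.le (by linarith : 0 ≤ K)
          linarith
        have := hdiff.add hσu
        simpa using this
      have hsum : Tendsto (fun k => ∑ e, w e * (S e (φ k) (B e (u (φ k))) ⬝ᵥ B e v)) atTop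
          (𝓝 (∑ e, w e * (σ e (B e ustar) ⬝ᵥ (B e v)))) := by
        refine tendsto_finsetSum _ fun e _ => Tendsto.const_mul _ ?_
        exact tendsto_finsetSum _ fun j _ => ((tendsto_pi_nhds.1 (hconv e)) j).mul_const _
      refine tendsto_nhds_unique hsum (tendsto_const_nhds.congr' ?_)
      filter_upwards [hφ.eventually_ge_atTop H] with k hk
      exact (hu (φ k) hk v).symm
    have hsub : ∀ ns : ℕ → ℕ, Tendsto ns atTop atTop → ∃ φ : ℕ → ℕ, StrictMono φ ∧
        ∃ ustar : Fin n → ℝ, Tendsto (fun k => u (ns (φ k))) atTop (𝓝 ustar) ∧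
          ∀ v : Fin n → ℝ, ∑ e, w e * (σ e (B e ustar) ⬝ᵥ (B e v)) = f ⬝ᵥ v := by
      intro ns hns
      obtain ⟨x, -, φ, hφ, hx⟩ := tendsto_subseq_of_frequently_bounded
        (Metric.isBounded_closedBall (x := (0 : Fin n → ℝ)) (r := r)) (x := fun k => u (ns k))
        ((hns.eventually_ge_atTop H).mono fun k hk => hbd _ hk).frequently
      exact ⟨φ, hφ, x, hx, hlimsol (fun k => ns (φ k)) (hns.comp hφ.tendsto_atTop) x hx⟩
    refine ⟨hsub id tendsto_id, fun θ hθ hmono => ?_⟩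
    have huniq : ∀ u₁ u₂ : Fin n → ℝ,
        (∀ v : Fin n → ℝ, ∑ e, w e * (σ e (B e u₁) ⬝ᵥ (B e v)) = f ⬝ᵥ v) →
        (∀ v : Fin n → ℝ, ∑ e, w e * (σ e (B e u₂) ⬝ᵥ (B e v)) = f ⬝ᵥ v) → u₁ = u₂ := by
      intro u₁ u₂ h₁ h₂
      have h3 : ∑ e, w e * ((σ e (B e u₁) - σ e (B e u₂)) ⬝ᵥ (B e (u₁ - u₂))) = 0 := by
        simp only [sub_dotProduct, mul_sub, Finset.sum_sub_distrib]
        rw [h₁, h₂, sub_self]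
      have h4 : θ * ∑ e, w e * ((𝔹 e).mulVec (B e (u₁ - u₂)) ⬝ᵥ (B e (u₁ - u₂))) ≤ 0 := by
        rw [← h3, Finset.mul_sum]
        refine Finset.sum_le_sum fun e _ => ?_
        have := mul_le_mul_of_nonneg_left (hmono e (B e u₁) (B e u₂)) (hw e).le
        rw [← map_sub] at this
        calc _ = w e * (θ * ((𝔹 e).mulVec (B e (u₁ - u₂)) ⬝ᵥ (B e (u₁ - u₂)))) := by ring
          _ ≤ _ := this
      have h5 : ∑ e, w e * ((𝔹 e).mulVec (B e (u₁ - u₂)) ⬝ᵥ (B e (u₁ - u₂))) ≤ 0 := by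
        by_contra hcon
        exact absurd h4 (not_le.2 (mul_pos hθ (not_le.1 hcon)))
      have h6 : (u₁ - u₂) ⬝ᵥ (u₁ - u₂) ≤ 0 :=
        (hstruct _).trans (mul_nonpos_of_nonneg_of_nonpos hc.le h5)
      have h7 : (u₁ - u₂) ⬝ᵥ (u₁ - u₂) = 0 :=
        le_antisymm h6 (Finset.sum_nonneg fun i _ => mul_self_nonneg _)
      exact sub_eq_zero.1 (dotProduct_self_eq_zero.1 h7)
    obtain ⟨-, -, ustar, -, hsol⟩ := hsub id tendsto_id
    refine ⟨ustar, hsol, fun u' hu' => huniq u' ustar hu' hsol, ?_⟩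
    refine tendsto_of_subseq_tendsto fun ns hns => ?_
    obtain ⟨φ, -, x, hx, hxsol⟩ := hsub ns hns
    refine ⟨φ, ?_⟩
    rw [huniq ustar x hsol hxsol]
    exact hx
end

section
/- Let ‖·‖ be a norm on ℝᵈ and let k = diam([0,1]^d) in this norm. Let ρ > 0, p ∈ ℝᵈ, and Q = p + [0,ρ)^d. Then for every ε ∈ ℝᵈ, every q′ ∈ Q and every β > 0: (e^{−2k²βρ²}/ρ^d) ∫_Q e^{−2β‖q−ε‖²} dq ≤ e^{−β‖q′−ε‖²} ≤ (e^{k²βρ²}/ρ^d) ∫_Q e^{−(β/2)‖q−ε‖²} dq. -/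
open MeasureTheory

/-- Comparison between a Gaussian weight evaluated at a point `q'` of a half-open cube
`Q = p + [0,ρ)^d` of side `ρ` and the Gaussian integrals over `Q`, for an arbitrary norm
`nrm` on `ℝᵈ` with `k = diam([0,1]^d)`:
`(e^{−2k²βρ²}/ρ^d) ∫_Q e^{−2β‖q−ε‖²} dq ≤ e^{−β‖q′−ε‖²} ≤ (e^{k²βρ²}/ρ^d) ∫_Q e^{−(β/2)‖q−ε‖²} dq`. -/
theorem gaussian_cube_comparison (d : ℕ)
    (nrm : (Fin d → ℝ) → ℝ)
    (htri : ∀ x y : Fin d → ℝ, nrm (x + y) ≤ nrm x + nrm y)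
    (hhom : ∀ (s : ℝ) (x : Fin d → ℝ), nrm (s • x) = |s| * nrm x)
    (hdef : ∀ x : Fin d → ℝ, nrm x = 0 → x = 0)
    (k : ℝ)
    (hk : k = sSup {r : ℝ | ∃ x ∈ Set.Icc (0 : Fin d → ℝ) 1,
        ∃ y ∈ Set.Icc (0 : Fin d → ℝ) 1, r = nrm (x - y)})
    (ρ : ℝ) (hρ : 0 < ρ) (p : Fin d → ℝ)
    (ε : Fin d → ℝ) (q' : Fin d → ℝ)
    (hq' : ∀ i, q' i ∈ Set.Ico (p i) (p i + ρ))
    (β : ℝ) (hβ : 0 < β) :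
    (Real.exp (-(2 * k ^ 2 * β * ρ ^ 2)) / ρ ^ d) *
        ∫ q in Set.univ.pi (fun i => Set.Ico (p i) (p i + ρ)),
          Real.exp (-(2 * β) * nrm (q - ε) ^ 2) ≤
      Real.exp (-β * nrm (q' - ε) ^ 2) ∧
    Real.exp (-β * nrm (q' - ε) ^ 2) ≤
      (Real.exp (k ^ 2 * β * ρ ^ 2) / ρ ^ d) *
        ∫ q in Set.univ.pi (fun i => Set.Ico (p i) (p i + ρ)),
          Real.exp (-(β / 2) * nrm (q - ε) ^ 2) := by
  have hconv : ConvexOn ℝ Set.univ nrm :=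
    (Seminorm.of (𝕜 := ℝ) nrm htri (by simpa using hhom)).convexOn
  have hcont : Continuous nrm :=
    continuousOn_univ.1 (hconv.continuousOn isOpen_univ)
  have hnn : ∀ x, 0 ≤ nrm x := fun x =>
    apply_nonneg (Seminorm.of (𝕜 := ℝ) nrm htri (by simpa using hhom)) x
  have hneg : ∀ x y, nrm (x - y) = nrm (y - x) := by
    intro x y
    have := hhom (-1) (y - x)
    simpa using this
  have hbdd : BddAbove {r : ℝ | ∃ x ∈ Set.Icc (0 : Fin d → ℝ) 1,
        ∃ y ∈ Set.Icc (0 : Fin d → ℝ) 1, r = nrm (x - y)} := by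
    have hc : IsCompact ((Set.Icc (0 : Fin d → ℝ) 1) ×ˢ (Set.Icc (0 : Fin d → ℝ) 1)) :=
      isCompact_Icc.prod isCompact_Icc
    have hf : Continuous (fun z : (Fin d → ℝ) × (Fin d → ℝ) => nrm (z.1 - z.2)) := by fun_prop
    refine (hc.image hf).bddAbove.mono ?_
    rintro r ⟨x, hx, y, hy, rfl⟩
    exact ⟨(x, y), ⟨hx, hy⟩, rfl⟩
  have hmem : ∀ q : Fin d → ℝ, (∀ i, q i ∈ Set.Ico (p i) (p i + ρ)) →
      ρ⁻¹ • (q - p) ∈ Set.Icc (0 : Fin d → ℝ) 1 := by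
    intro q hq
    refine ⟨fun i => ?_, fun i => ?_⟩
    · have := (hq i).1
      simp only [Pi.zero_apply, Pi.smul_apply, Pi.sub_apply, smul_eq_mul]
      exact mul_nonneg (inv_nonneg.2 hρ.le) (by linarith)
    · have := (hq i).2
      simp only [Pi.one_apply, Pi.smul_apply, Pi.sub_apply, smul_eq_mul]
      rw [inv_mul_le_iff₀ hρ]
      linarith
  have hdist : ∀ q : Fin d → ℝ, (∀ i, q i ∈ Set.Ico (p i) (p i + ρ)) →
      nrm (q - q') ≤ k * ρ := by
    intro q hq
    have h1 : nrm (ρ⁻¹ • (q - p) - ρ⁻¹ • (q' - p)) ≤ k := by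
      rw [hk]
      exact le_csSup hbdd ⟨_, hmem q hq, _, hmem q' hq', rfl⟩
    have h2 : q - q' = ρ • (ρ⁻¹ • (q - p) - ρ⁻¹ • (q' - p)) := by
      rw [← smul_sub, smul_inv_smul₀ hρ.ne']
      abel
    rw [h2, hhom, abs_of_pos hρ, mul_comm]
    exact mul_le_mul_of_nonneg_right h1 hρ.le
  have hsq : ∀ a b c : ℝ, 0 ≤ b → b ≤ a + c → b ^ 2 ≤ 2 * a ^ 2 + 2 * c ^ 2 := by
    intro a b c hb h
    nlinarith [sq_nonneg (a - c), pow_le_pow_left₀ hb h 2]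
  have hA : ∀ q : Fin d → ℝ, (∀ i, q i ∈ Set.Ico (p i) (p i + ρ)) →
      nrm (q' - ε) ^ 2 ≤ 2 * nrm (q - ε) ^ 2 + 2 * (k * ρ) ^ 2 := by
    intro q hq
    apply hsq _ _ _ (hnn _)
    have h1 := htri (q - ε) (q' - q)
    have h2 : q - ε + (q' - q) = q' - ε := by abel
    rw [h2, hneg q' q] at h1
    linarith [hdist q hq]
  have hB : ∀ q : Fin d → ℝ, (∀ i, q i ∈ Set.Ico (p i) (p i + ρ)) →
      nrm (q - ε) ^ 2 ≤ 2 * nrm (q' - ε) ^ 2 + 2 * (k * ρ) ^ 2 := by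
    intro q hq
    apply hsq _ _ _ (hnn _)
    have h1 := htri (q' - ε) (q - q')
    have h2 : q' - ε + (q - q') = q - ε := by abel
    rw [h2] at h1
    linarith [hdist q hq]
  have hvol : (volume : Measure (Fin d → ℝ)).real
      (Set.univ.pi (fun i => Set.Ico (p i) (p i + ρ))) = ρ ^ d := by
    rw [Measure.real, Real.volume_pi_Ico_toReal (b := fun i => p i + ρ)
      (fun i => by simpa using hρ.le)]
    simp
  have hms : MeasurableSet (Set.univ.pi (fun i => Set.Ico (p i) (p i + ρ))) :=
    MeasurableSet.univ_pi fun i => measurableSet_Ico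
  have hfin : (volume : Measure (Fin d → ℝ))
      (Set.univ.pi (fun i => Set.Ico (p i) (p i + ρ))) ≠ ⊤ := by
    rw [Real.volume_pi_Ico (b := fun i => p i + ρ)]
    exact ENNReal.prod_ne_top fun i _ => ENNReal.ofReal_ne_top
  have hint : ∀ t : ℝ, IntegrableOn (fun q => Real.exp (t * nrm (q - ε) ^ 2))
      (Set.univ.pi (fun i => Set.Ico (p i) (p i + ρ))) volume := by
    intro t
    have hc : Continuous (fun q => Real.exp (t * nrm (q - ε) ^ 2)) := by fun_prop
    refine (hc.continuousOn.integrableOn_compact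
      (isCompact_Icc (a := p) (b := fun i => p i + ρ))).mono_set ?_
    intro q hq
    exact ⟨fun i => (hq i trivial).1, fun i => (hq i trivial).2.le⟩
  have hρd : 0 < ρ ^ d := pow_pos hρ d
  constructor
  · rw [div_mul_eq_mul_div, div_le_iff₀ hρd, ← integral_const_mul]
    calc _ ≤ ∫ q in Set.univ.pi (fun i => Set.Ico (p i) (p i + ρ)),
          Real.exp (-β * nrm (q' - ε) ^ 2) := by
          refine setIntegral_mono_on ((hint _).const_mul _) (integrableOn_const hfin) hms ?_
          intro q hq
          rw [← Real.exp_add, Real.exp_le_exp]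
          nlinarith [mul_le_mul_of_nonneg_left (hA q fun i => hq i trivial) hβ.le]
      _ = _ := by rw [setIntegral_const, hvol, smul_eq_mul, mul_comm]
  · rw [div_mul_eq_mul_div, le_div_iff₀ hρd, ← integral_const_mul]
    calc _ = ∫ q in Set.univ.pi (fun i => Set.Ico (p i) (p i + ρ)),
          Real.exp (-β * nrm (q' - ε) ^ 2) := by
          rw [setIntegral_const, hvol, smul_eq_mul, mul_comm]
      _ ≤ _ := by
          refine setIntegral_mono_on (integrableOn_const hfin) ((hint _).const_mul _) hms ?_
          intro q hq
          rw [← Real.exp_add, Real.exp_le_exp]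
          nlinarith [mul_le_mul_of_nonneg_left (hB q fun i => hq i trivial) hβ.le]
end

section
/- Let ‖·‖ be a norm on ℝᵈ with k = diam([0,1]^d) in this norm and c = ∫_{ℝᵈ} e^{−‖q‖²} dq. Let ρ > 0 and let (ε_i)_{i=1}^N be points in ℝᵈ such that every cube p + [0,ρ)^d with p ∈ ρℤᵈ contains at most C of the points ε_i. Then for every ε ∈ ℝᵈ and β > 0: Σ_{i=1}^N e^{−β‖ε_i−ε‖²} ≤ (C c / ρ^d) · e^{k²βρ²} · (β/2)^{−d/2}. -/
open MeasureTheory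

/-- Two-sided comparison with the sup norm. -/
lemma pf_nrm_bounds (d : ℕ) (nrm : (Fin d → ℝ) → ℝ)
    (htri : ∀ x y : Fin d → ℝ, nrm (x + y) ≤ nrm x + nrm y)
    (hhom : ∀ (s : ℝ) (x : Fin d → ℝ), nrm (s • x) = |s| * nrm x)
    (hdef : ∀ x : Fin d → ℝ, nrm x = 0 → x = 0) :
    (∀ x, 0 ≤ nrm x) ∧ Continuous nrm ∧ (∃ K, 0 ≤ K ∧ ∀ x, nrm x ≤ K * ‖x‖) ∧
      ∃ m, 0 < m ∧ ∀ x, m * ‖x‖ ≤ nrm x := by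
  have h0 : nrm 0 = 0 := by simpa using hhom 0 0
  have hneg : ∀ x, nrm (-x) = nrm x := fun x => by simpa using hhom (-1) x
  have hnn : ∀ x, 0 ≤ nrm x := fun x => by
    have h1 := htri x (-x)
    rw [hneg, add_neg_cancel, h0] at h1
    linarith
  have hsum : ∀ (s : Finset (Fin d)) (f : Fin d → Fin d → ℝ),
      nrm (∑ i ∈ s, f i) ≤ ∑ i ∈ s, nrm (f i) := by
    intro s f
    induction s using Finset.induction_on with
    | empty => simp [h0]
    | insert a s ha ih =>
      rw [Finset.sum_insert ha, Finset.sum_insert ha]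
      linarith [htri (f a) (∑ i ∈ s, f i)]
  have hK : ∀ x, nrm x ≤ (∑ i, nrm (Pi.single i 1)) * ‖x‖ := by
    intro x
    have hx : x = ∑ i, x i • (Pi.single i (1:ℝ) : Fin d → ℝ) := by
      ext j
      simp [Finset.sum_apply, Pi.single_apply]
    calc nrm x = nrm (∑ i, x i • (Pi.single i (1:ℝ) : Fin d → ℝ)) := by rw [← hx]
      _ ≤ ∑ i, nrm (x i • (Pi.single i (1:ℝ) : Fin d → ℝ)) := hsum _ _
      _ ≤ ∑ i, nrm (Pi.single i 1) * ‖x‖ := by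
        apply Finset.sum_le_sum
        intro i _
        rw [hhom, mul_comm]
        exact mul_le_mul_of_nonneg_left (norm_le_pi_norm x i) (hnn _)
      _ = _ := by rw [Finset.sum_mul]
  have hK0 : 0 ≤ ∑ i : Fin d, nrm (Pi.single i 1) := Finset.sum_nonneg fun i _ => hnn _
  have hcont : Continuous nrm := by
    have : LipschitzWith ⟨_, hK0⟩ nrm := by
      apply LipschitzWith.of_le_add_mul
      intro x y
      have h1 := htri y (x - y)
      rw [add_sub_cancel] at h1
      have h2 := hK (x - y)
      rw [dist_eq_norm]
      exact h1.trans (add_le_add_right h2 _)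
    exact this.continuous
  refine ⟨hnn, hcont, ⟨_, hK0, hK⟩, ?_⟩
  rcases (Metric.sphere (0 : Fin d → ℝ) 1).eq_empty_or_nonempty with he | hne
  · refine ⟨1, one_pos, fun x => ?_⟩
    by_cases hx : x = 0
    · simp [hx, h0]
    · exfalso
      have : (‖x‖⁻¹ • x) ∈ Metric.sphere (0 : Fin d → ℝ) 1 := by
        simp [norm_smul, norm_ne_zero_iff.2 hx]
      rw [he] at this
      exact this
  · obtain ⟨z, hz, hmin⟩ := (isCompact_sphere (0 : Fin d → ℝ) 1).exists_isMinOn hne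
      hcont.continuousOn
    refine ⟨nrm z, lt_of_le_of_ne (hnn z) ?_, fun x => ?_⟩
    · intro h
      have := hdef z h.symm
      simp [this] at hz
    · by_cases hx : x = 0
      · simp [hx, h0]
      · have hmem : (‖x‖⁻¹ • x) ∈ Metric.sphere (0 : Fin d → ℝ) 1 := by
          simp [norm_smul, norm_ne_zero_iff.2 hx]
        have h1 : nrm z ≤ nrm (‖x‖⁻¹ • x) := hmin hmem
        have hp : 0 < ‖x‖ := norm_pos_iff.2 hx
        rw [hhom, abs_of_pos (inv_pos.2 hp), inv_mul_eq_div, le_div_iff₀ hp] at h1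
        exact h1

lemma pf_integrable (d : ℕ) (nrm : (Fin d → ℝ) → ℝ) (hcont : Continuous nrm)
    (m : ℝ) (hm : 0 < m) (hlow : ∀ x, m * ‖x‖ ≤ nrm x) (b : ℝ) (hb : 0 < b) :
    Integrable (fun q : Fin d → ℝ => Real.exp (-b * nrm q ^ 2)) := by
  have ha : 0 < b * m ^ 2 / (d + 1) := by positivity
  have hg : Integrable (fun q : Fin d → ℝ =>
      ∏ i, Real.exp (-(b * m ^ 2 / (d + 1)) * q i ^ 2)) :=
    Integrable.fintype_prod (f := fun (_ : Fin d) (x : ℝ) =>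
      Real.exp (-(b * m ^ 2 / (d + 1)) * x ^ 2)) (fun _ => integrable_exp_neg_mul_sq ha)
  refine hg.mono' (by fun_prop) (Filter.Eventually.of_forall fun q => ?_)
  rw [Real.norm_eq_abs, abs_of_pos (Real.exp_pos _), ← Real.exp_sum, Real.exp_le_exp,
    ← Finset.mul_sum]
  have h1 : ∑ i, q i ^ 2 ≤ (d + 1) * ‖q‖ ^ 2 := by
    calc ∑ i, q i ^ 2 ≤ ∑ _i : Fin d, ‖q‖ ^ 2 := by
          apply Finset.sum_le_sum
          intro i _
          rw [← sq_abs]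
          exact pow_le_pow_left₀ (abs_nonneg _) (norm_le_pi_norm q i) 2
      _ = d * ‖q‖ ^ 2 := by simp
      _ ≤ _ := by nlinarith [sq_nonneg ‖q‖]
  have h2 : (m * ‖q‖) ^ 2 ≤ nrm q ^ 2 := pow_le_pow_left₀ (by positivity) (hlow q) 2
  have h3 : b * m ^ 2 / (d + 1) * ∑ i, q i ^ 2 ≤ b * nrm q ^ 2 := by
    calc b * m ^ 2 / (d + 1) * ∑ i, q i ^ 2 ≤ b * m ^ 2 / (d + 1) * ((d + 1) * ‖q‖ ^ 2) :=
          mul_le_mul_of_nonneg_left h1 ha.le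
      _ = b * (m * ‖q‖) ^ 2 := by field_simp
      _ ≤ _ := mul_le_mul_of_nonneg_left h2 hb.le
  linarith

lemma pf_scaling (d : ℕ) (nrm : (Fin d → ℝ) → ℝ)
    (hhom : ∀ (s : ℝ) (x : Fin d → ℝ), nrm (s • x) = |s| * nrm x) (b : ℝ) (hb : 0 < b) :
    ∫ q : Fin d → ℝ, Real.exp (-b * nrm q ^ 2) =
      b ^ (-(d : ℝ) / 2) * ∫ q : Fin d → ℝ, Real.exp (-nrm q ^ 2) := by
  have h := Measure.integral_comp_smul (volume : Measure (Fin d → ℝ))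
    (fun q => Real.exp (-nrm q ^ 2)) (Real.sqrt b)
  have e : ∀ q, Real.exp (-nrm (Real.sqrt b • q) ^ 2) = Real.exp (-b * nrm q ^ 2) := by
    intro q
    rw [hhom, mul_pow, sq_abs, Real.sq_sqrt hb.le, neg_mul]
  simp only [e] at h
  rw [h, smul_eq_mul]
  congr 1
  rw [Module.finrank_fin_fun, abs_of_nonneg (by positivity), Real.sqrt_eq_rpow,
    ← Real.rpow_natCast, ← Real.rpow_mul hb.le, ← Real.rpow_neg hb.le]
  congr 1
  ring



/-- **Upper bound on the partition function.** If every cube `p + [0,ρ)^d`, `p ∈ ρℤᵈ`,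
contains at most `C` of the points `ε_i`, then for every `ε` and `β > 0`,
`Σ_i e^{−β‖ε_i−ε‖²} ≤ (C c / ρ^d) e^{k²βρ²} (β/2)^{−d/2}`, where `k = diam([0,1]^d)` and
`c = ∫_{ℝᵈ} e^{−‖q‖²} dq`, both for an arbitrary norm `nrm` on `ℝᵈ`. -/
theorem partition_function_upper_bound (d : ℕ)
    (nrm : (Fin d → ℝ) → ℝ)
    (htri : ∀ x y : Fin d → ℝ, nrm (x + y) ≤ nrm x + nrm y)
    (hhom : ∀ (s : ℝ) (x : Fin d → ℝ), nrm (s • x) = |s| * nrm x)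
    (hdef : ∀ x : Fin d → ℝ, nrm x = 0 → x = 0)
    (k : ℝ)
    (hk : k = sSup {r : ℝ | ∃ x ∈ Set.Icc (0 : Fin d → ℝ) 1,
        ∃ y ∈ Set.Icc (0 : Fin d → ℝ) 1, r = nrm (x - y)})
    (c : ℝ) (hc : c = ∫ q : Fin d → ℝ, Real.exp (-nrm q ^ 2))
    (ρ : ℝ) (hρ : 0 < ρ)
    (N : ℕ) (εs : Fin N → Fin d → ℝ)
    (C : ℕ)
    (hcount : ∀ p : Fin d → ℤ,
      Set.ncard {i : Fin N | ∀ j, εs i j ∈ Set.Ico (ρ * p j) (ρ * p j + ρ)} ≤ C)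
    (ε : Fin d → ℝ) (β : ℝ) (hβ : 0 < β) :
    ∑ i : Fin N, Real.exp (-β * nrm (εs i - ε) ^ 2) ≤
      ((C : ℝ) * c / ρ ^ d) * Real.exp (k ^ 2 * β * ρ ^ 2) *
        (β / 2) ^ (-(d : ℝ) / 2) := by
  obtain ⟨hnn, hcont, ⟨K, hK0, hK⟩, m, hm, hlow⟩ := pf_nrm_bounds d nrm htri hhom hdef
  have hb : 0 < β / 2 := by positivity
  set g : (Fin d → ℝ) → ℝ := fun q => Real.exp (-(β / 2) * nrm (q - ε) ^ 2) with hg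
  have hgint : Integrable g :=
    (pf_integrable d nrm hcont m hm hlow (β / 2) hb).comp_sub_right ε
  have hgI : ∫ q, g q = (β / 2) ^ (-(d : ℝ) / 2) * c := by
    rw [hc, ← pf_scaling d nrm hhom _ hb]
    exact integral_sub_right_eq_self (fun q => Real.exp (-(β / 2) * nrm q ^ 2)) ε
  -- diameter bound
  have hdiam : ∀ x ∈ Set.Icc (0 : Fin d → ℝ) 1, ∀ y ∈ Set.Icc (0 : Fin d → ℝ) 1,
      nrm (x - y) ≤ k := by
    intro x hx y hy
    rw [hk]
    apply le_csSup
    · refine ⟨K, ?_⟩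
      rintro r ⟨x, hx, y, hy, rfl⟩
      have h1 : ‖x - y‖ ≤ 1 := by
        rw [pi_norm_le_iff_of_nonneg zero_le_one]
        intro i
        have := hx.1 i; have := hx.2 i; have := hy.1 i; have := hy.2 i
        simp only [Pi.zero_apply, Pi.one_apply] at *
        rw [Pi.sub_apply, Real.norm_eq_abs, abs_le]
        constructor <;> linarith
      nlinarith [hK (x - y)]
    · exact ⟨x, hx, y, hy, rfl⟩
  -- the cube of index p
  set Q : (Fin d → ℤ) → Set (Fin d → ℝ) := fun p =>
    Set.univ.pi fun j => Set.Ico (ρ * p j) (ρ * p j + ρ) with hQ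
  have hQmem : ∀ p q, q ∈ Q p ↔ ∀ j, q j ∈ Set.Ico (ρ * p j) (ρ * p j + ρ) := by
    intro p q; simp [hQ, Set.mem_pi]
  have hQmeas : ∀ p, MeasurableSet (Q p) := fun p =>
    MeasurableSet.univ_pi fun j => measurableSet_Ico
  have hQvol : ∀ p, volume.real (Q p) = ρ ^ d := by
    intro p
    simp [hQ, measureReal_def, volume_pi_pi, Real.volume_Ico, hρ.le]
  set P : (Fin d → ℝ) → Fin d → ℤ := fun x j => ⌊x j / ρ⌋ with hP
  have hQP : ∀ p q, q ∈ Q p ↔ P q = p := by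
    intro p q
    rw [hQmem, funext_iff]
    refine forall_congr' fun j => ?_
    simp only [hP]
    rw [Int.floor_eq_iff, le_div_iff₀ hρ, div_lt_iff₀ hρ, Set.mem_Ico]
    constructor <;> rintro ⟨h1, h2⟩ <;> constructor <;> linarith
  have hunit : ∀ p, ∀ q ∈ Q p, (fun j => q j / ρ - p j) ∈ Set.Icc (0 : Fin d → ℝ) 1 := by
    intro p q hq
    rw [hQmem] at hq
    constructor <;> intro j <;> have h := hq j <;> rw [Set.mem_Ico] at h
    · have : (p j : ℝ) ≤ q j / ρ := by rw [le_div_iff₀ hρ]; linarith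
      simpa using this
    · have : q j / ρ ≤ p j + 1 := by rw [div_le_iff₀ hρ]; linarith
      simp only [Pi.one_apply]; linarith
  have hcube : ∀ p, ∀ x ∈ Q p, ∀ y ∈ Q p, nrm (x - y) ≤ ρ * k := by
    intro p x hx y hy
    have h := hdiam _ (hunit p x hx) _ (hunit p y hy)
    have e : x - y = ρ • ((fun j => x j / ρ - p j) - fun j => y j / ρ - p j) := by
      ext j
      simp only [Pi.sub_apply, Pi.smul_apply, smul_eq_mul]
      field_simp
      ring
    rw [e, hhom, abs_of_pos hρ]
    exact mul_le_mul_of_nonneg_left h hρ.le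
  have hpt : ∀ i, ∀ q ∈ Q (P (εs i)), Real.exp (-β * nrm (εs i - ε) ^ 2) ≤
      Real.exp (k ^ 2 * β * ρ ^ 2) * g q := by
    intro i q hq
    have h1 := hcube _ q hq (εs i) ((hQP _ _).2 rfl)
    have h2 := htri (q - εs i) (εs i - ε)
    rw [sub_add_sub_cancel] at h2
    have h3 : nrm (q - ε) ^ 2 ≤ 2 * (ρ * k) ^ 2 + 2 * nrm (εs i - ε) ^ 2 := by
      have h4 : nrm (q - ε) ≤ ρ * k + nrm (εs i - ε) := by linarith
      have h5 := pow_le_pow_left₀ (hnn _) h4 2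
      nlinarith [sq_nonneg (ρ * k - nrm (εs i - ε))]
    rw [hg, ← Real.exp_add, Real.exp_le_exp]
    nlinarith [mul_le_mul_of_nonneg_left h3 hb.le]
  set E := Real.exp (k ^ 2 * β * ρ ^ 2) with hE
  have hEpos : 0 < E := Real.exp_pos _
  have hint : ∀ i, ρ ^ d * Real.exp (-β * nrm (εs i - ε) ^ 2) ≤
      E * ∫ q, (Q (P (εs i))).indicator g q := by
    intro i
    have hfin : volume (Q (P (εs i))) ≠ ⊤ := by
      intro h
      have h' := hQvol (P (εs i))
      rw [measureReal_def, h] at h'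
      have : 0 < ρ ^ d := by positivity
      simp at h'
      linarith
    have h := setIntegral_mono_on (μ := volume) (s := Q (P (εs i)))
      (f := fun _ => Real.exp (-β * nrm (εs i - ε) ^ 2)) (g := fun q => E * g q)
      (integrableOn_const hfin) (hgint.const_mul E).integrableOn (hQmeas _) (hpt i)
    rw [setIntegral_const, hQvol, smul_eq_mul, integral_const_mul] at h
    rwa [integral_indicator (hQmeas _)]
  have hcnt : ∀ q, ∑ i, (Q (P (εs i))).indicator g q ≤ C * g q := by
    classical
    intro q
    have e : ∀ i, (Q (P (εs i))).indicator g q = if εs i ∈ Q (P q) then g q else 0 := by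
      intro i
      rw [Set.indicator_apply]
      congr 1
      rw [hQP, hQP]
      exact propext eq_comm
    simp only [e]
    rw [← Finset.sum_filter, Finset.sum_const, nsmul_eq_mul]
    apply mul_le_mul_of_nonneg_right _ (Real.exp_pos _).le
    have h := hcount (P q)
    rw [Set.ncard_eq_toFinset_card'] at h
    have e2 : (Finset.univ.filter fun i => εs i ∈ Q (P q)) =
        Set.toFinset {i : Fin N | ∀ j, εs i j ∈ Set.Ico (ρ * P q j) (ρ * P q j + ρ)} := by
      ext i
      simp only [Finset.mem_filter, Finset.mem_univ, true_and, Set.mem_toFinset,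
        Set.mem_setOf_eq, hQmem]
    rw [e2]
    exact_mod_cast h
  have hii : ∀ i ∈ Finset.univ, Integrable ((Q (P (εs i))).indicator g) := fun i _ =>
    hgint.indicator (hQmeas _)
  have htot : ∑ i, ∫ q, (Q (P (εs i))).indicator g q ≤ C * ∫ q, g q := by
    rw [← integral_finset_sum _ hii, ← integral_const_mul]
    exact integral_mono (integrable_finset_sum _ hii) (hgint.const_mul _) hcnt
  have hρd : 0 < ρ ^ d := by positivity
  have hfinal : ρ ^ d * ∑ i, Real.exp (-β * nrm (εs i - ε) ^ 2) ≤ E * (C * ∫ q, g q) := by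
    rw [Finset.mul_sum]
    refine (Finset.sum_le_sum fun i _ => hint i).trans ?_
    rw [← Finset.mul_sum]
    exact mul_le_mul_of_nonneg_left htot hEpos.le
  rw [hgI] at hfinal
  have e : (C : ℝ) * c / ρ ^ d * E * (β / 2) ^ (-(d : ℝ) / 2) =
      (E * (C * ((β / 2) ^ (-(d : ℝ) / 2) * c))) / ρ ^ d := by ring
  rw [e, le_div_iff₀ hρd, mul_comm]
  exact hfinal
end

section
/- Let ‖·‖ be a norm on ℝᵈ with k = diam([0,1]^d) in this norm and c′ = ∫_{B_1(0)} e^{−‖q‖²} dq. Let ρ > 0, R ≥ 1 + 2ρk, β ≥ 1, and let (ε_i)_{i=1}^N be points in ℝᵈ such that every cube p + [0,ρ)^d with p ∈ ρℤᵈ and ‖p‖ < 2R − ρk contains at least N₀ of the points ε_i. Then for every ε ∈ ℝᵈ with ‖ε‖ ≤ R: Σ_{i=1}^N e^{−β‖ε_i−ε‖²} ≥ (c′ N₀ / ρ^d) · e^{−2k²βρ²} · (2β)^{−d/2}. -/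
open MeasureTheory

/-- **Lower bound on the partition function.** If every cube `p + [0,ρ)^d` with `p ∈ ρℤᵈ`,
`‖p‖ < 2R − ρk`, contains at least `N₀` of the points `ε_i`, then for every `ε` with
`‖ε‖ ≤ R`, `Σ_i e^{−β‖ε_i−ε‖²} ≥ (c′N₀/ρ^d) e^{−2k²βρ²} (2β)^{−d/2}`, where
`k = diam([0,1]^d)` and `c′ = ∫_{B_1(0)} e^{−‖q‖²} dq`, for an arbitrary norm `nrm` on `ℝᵈ`,
provided `R ≥ 1 + 2ρk` and `β ≥ 1`. -/
theorem partition_function_lower_bound (d : ℕ)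
    (nrm : (Fin d → ℝ) → ℝ)
    (htri : ∀ x y : Fin d → ℝ, nrm (x + y) ≤ nrm x + nrm y)
    (hhom : ∀ (s : ℝ) (x : Fin d → ℝ), nrm (s • x) = |s| * nrm x)
    (hdef : ∀ x : Fin d → ℝ, nrm x = 0 → x = 0)
    (k : ℝ)
    (hk : k = sSup {r : ℝ | ∃ x ∈ Set.Icc (0 : Fin d → ℝ) 1,
        ∃ y ∈ Set.Icc (0 : Fin d → ℝ) 1, r = nrm (x - y)})
    (c' : ℝ) (hc' : c' = ∫ q in {q : Fin d → ℝ | nrm q < 1}, Real.exp (-nrm q ^ 2))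
    (ρ : ℝ) (hρ : 0 < ρ)
    (R : ℝ) (hR : 1 + 2 * ρ * k ≤ R)
    (β : ℝ) (hβ : 1 ≤ β)
    (N : ℕ) (εs : Fin N → Fin d → ℝ)
    (N₀ : ℕ)
    (hcount : ∀ p : Fin d → ℤ, nrm (fun j => ρ * p j) < 2 * R - ρ * k →
      N₀ ≤ Set.ncard {i : Fin N | ∀ j, εs i j ∈ Set.Ico (ρ * p j) (ρ * p j + ρ)})
    (ε : Fin d → ℝ) (hε : nrm ε ≤ R) :
    (c' * (N₀ : ℝ) / ρ ^ d) * Real.exp (-(2 * k ^ 2 * β * ρ ^ 2)) *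
        (2 * β) ^ (-(d : ℝ) / 2) ≤
      ∑ i : Fin N, Real.exp (-β * nrm (εs i - ε) ^ 2) := by
  have h0 : nrm 0 = 0 := by simpa using hhom 0 0
  have hneg : ∀ x, nrm (-x) = nrm x := fun x => by simpa using hhom (-1) x
  have hnn : ∀ x, 0 ≤ nrm x := fun x => by
    have := htri x (-x)
    rw [add_neg_cancel, h0, hneg] at this
    linarith
  -- upper bound by the sup norm
  obtain ⟨C, hC0, hC⟩ : ∃ C : ℝ, 0 ≤ C ∧ ∀ x, nrm x ≤ C * ‖x‖ := by
    refine ⟨∑ j, nrm (Pi.single j 1), Finset.sum_nonneg fun j _ => hnn _, fun x => ?_⟩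
    have hs : ∀ (S : Finset (Fin d)) (f : Fin d → Fin d → ℝ),
        nrm (∑ j ∈ S, f j) ≤ ∑ j ∈ S, nrm (f j) := fun S f =>
      Finset.le_sum_of_subadditive nrm h0.le htri S f
    have hx : x = ∑ j, x j • (Pi.single j 1 : Fin d → ℝ) := pi_eq_sum_univ' x
    calc nrm x = nrm (∑ j, x j • (Pi.single j 1 : Fin d → ℝ)) := by rw [← hx]
      _ ≤ ∑ j, nrm (x j • (Pi.single j 1 : Fin d → ℝ)) := hs _ _
      _ ≤ ∑ j, nrm (Pi.single j 1) * ‖x‖ := by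
          refine Finset.sum_le_sum fun j _ => ?_
          rw [hhom, mul_comm]
          exact mul_le_mul_of_nonneg_left (norm_le_pi_norm x j) (hnn _)
      _ = _ := by rw [Finset.sum_mul]
  have hcont : Continuous nrm := by
    have : LipschitzWith ⟨C, hC0⟩ nrm := by
      refine LipschitzWith.of_le_add_mul _ fun x y => ?_
      have h1 := htri y (x - y)
      have h2 := hC (x - y)
      rw [add_sub_cancel] at h1
      rw [dist_eq_norm]
      show nrm x ≤ nrm y + C * ‖x - y‖
      linarith
    exact this.continuous
  have hbdd : BddAbove {r : ℝ | ∃ x ∈ Set.Icc (0 : Fin d → ℝ) 1,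
        ∃ y ∈ Set.Icc (0 : Fin d → ℝ) 1, r = nrm (x - y)} := by
    refine ⟨C, ?_⟩
    rintro r ⟨x, hx, y, hy, rfl⟩
    have h1 : ‖x - y‖ ≤ 1 := by
      rw [pi_norm_le_iff_of_nonneg zero_le_one]
      intro j
      have := hx.1 j
      have := hx.2 j
      have := hy.1 j
      have := hy.2 j
      simp only [Pi.zero_apply, Pi.one_apply] at *
      rw [Pi.sub_apply, Real.norm_eq_abs, abs_le]
      constructor <;> linarith
    calc _ ≤ C * ‖x - y‖ := hC _
      _ ≤ C * 1 := by gcongr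
      _ = C := mul_one C
  have hdiam : ∀ x ∈ Set.Icc (0 : Fin d → ℝ) 1, ∀ y ∈ Set.Icc (0 : Fin d → ℝ) 1,
      nrm (x - y) ≤ k := fun x hx y hy => by
    rw [hk]
    exact le_csSup hbdd ⟨x, hx, y, hy, rfl⟩
  have hk0 : 0 ≤ k := by
    have := hdiam 0 ⟨le_rfl, zero_le_one⟩ 0 ⟨le_rfl, zero_le_one⟩
    simpa [h0] using this
  -- two points in the same closed cube
  have hcube : ∀ a x y : Fin d → ℝ, (∀ j, x j ∈ Set.Icc (a j) (a j + ρ)) →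
      (∀ j, y j ∈ Set.Icc (a j) (a j + ρ)) → nrm (x - y) ≤ ρ * k := by
    intro a x y hx hy
    have key : ∀ z : Fin d → ℝ, (∀ j, z j ∈ Set.Icc (a j) (a j + ρ)) →
        ρ⁻¹ • (z - a) ∈ Set.Icc (0 : Fin d → ℝ) 1 := by
      intro z hz
      refine ⟨fun j => ?_, fun j => ?_⟩
      · have := (hz j).1
        simp only [Pi.zero_apply, Pi.smul_apply, Pi.sub_apply, smul_eq_mul]
        have : 0 ≤ z j - a j := by linarith
        positivity
      · have := (hz j).2
        simp only [Pi.one_apply, Pi.smul_apply, Pi.sub_apply, smul_eq_mul]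
        rw [inv_mul_le_iff₀ hρ]
        linarith
    have h := hdiam _ (key x hx) _ (key y hy)
    have e : ρ⁻¹ • (x - a) - ρ⁻¹ • (y - a) = ρ⁻¹ • (x - y) := by
      rw [← smul_sub]; congr 1; abel
    rw [e, hhom, abs_of_pos (inv_pos.2 hρ), inv_mul_le_iff₀ hρ] at h
    exact h
  -- scaling parameter
  have hβ2 : 0 < 2 * β := by linarith
  set s : ℝ := (Real.sqrt (2 * β))⁻¹ with hs
  have hspos : 0 < s := by rw [hs]; positivity
  have hs2 : 2 * β * s ^ 2 = 1 := by
    rw [hs, inv_pow, Real.sq_sqrt hβ2.le]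
    field_simp
  have hs1 : s ≤ 1 := by
    by_contra hcon
    push Not at hcon
    nlinarith
  have hpow : (2 * β) ^ (-(d : ℝ) / 2) = s ^ d := by
    rw [hs, Real.sqrt_eq_rpow, ← Real.rpow_neg hβ2.le, ← Real.rpow_natCast, ← Real.rpow_mul hβ2.le]
    congr 1
    ring
  set E : ℝ := Real.exp (-(2 * k ^ 2 * β * ρ ^ 2)) with hE
  set w : Fin N → ℝ := fun i => Real.exp (-β * nrm (εs i - ε) ^ 2) with hw
  let P : Fin N → Fin d → ℝ := fun i j => ρ * ⌊εs i j / ρ⌋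
  let Q : Fin N → Set (Fin d → ℝ) := fun i =>
    Set.univ.pi fun j => Set.Ico ((P i j - ε j) / s) ((P i j + ρ - ε j) / s)
  have hQm : ∀ i, MeasurableSet (Q i) := fun i =>
    MeasurableSet.univ_pi fun j => measurableSet_Ico
  have hQv : ∀ i, volume (Q i) = ENNReal.ofReal ((ρ / s) ^ d) := fun i => by
    have e : ∀ j, (P i j + ρ - ε j) / s - (P i j - ε j) / s = ρ / s := fun j => by ring
    rw [Real.volume_pi_Ico]
    simp only [e, Finset.prod_const, Finset.card_univ, Fintype.card_fin]
    rw [ENNReal.ofReal_pow (by positivity)]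
  have hQi : ∀ i, Integrable ((Q i).indicator fun _ => w i) := fun i => by
    rw [integrable_indicator_iff (hQm i)]
    refine integrableOn_const ?_
    rw [hQv]; exact ENNReal.ofReal_ne_top
  have hQint : ∀ i, ∫ u, (Q i).indicator (fun _ => w i) u = (ρ / s) ^ d * w i := fun i => by
    rw [integral_indicator_const _ (hQm i), Measure.real, hQv,
      ENNReal.toReal_ofReal (by positivity), smul_eq_mul]
  have hBm : MeasurableSet {q : Fin d → ℝ | nrm q < 1} :=
    (isOpen_lt hcont continuous_const).measurableSet
  have hwnn : ∀ i, 0 ≤ w i := fun i => (Real.exp_pos _).le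
  -- pointwise bound
  have hpt : ∀ u ∈ {q : Fin d → ℝ | nrm q < 1},
      (N₀ * E) * Real.exp (-nrm u ^ 2) ≤ ∑ i, (Q i).indicator (fun _ => w i) u := by
    intro u hu
    have hu : nrm u < 1 := hu
    set q : Fin d → ℝ := ε + s • u with hq
    let p : Fin d → ℤ := fun j => ⌊q j / ρ⌋
    have hqp : ∀ j, q j ∈ Set.Ico (ρ * p j) (ρ * p j + ρ) := fun j => by
      have h1 := Int.floor_le (q j / ρ)
      have h2 := Int.lt_floor_add_one (q j / ρ)
      rw [le_div_iff₀ hρ] at h1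
      rw [div_lt_iff₀ hρ] at h2
      constructor
      · show ρ * (⌊q j / ρ⌋ : ℝ) ≤ q j
        linarith
      · show q j < ρ * (⌊q j / ρ⌋ : ℝ) + ρ
        linarith
    have hsu : nrm (s • u) < 1 := by
      rw [hhom, abs_of_pos hspos]
      nlinarith [hnn u]
    have hpn : nrm (fun j => ρ * p j) < 2 * R - ρ * k := by
      have h1 := hcube (fun j => ρ * p j) (fun j => ρ * p j) q
        (fun j => ⟨le_rfl, by linarith⟩) (fun j => ⟨(hqp j).1, (hqp j).2.le⟩)
      have h2 := htri ((fun j => ρ * (p j : ℝ)) - q) q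
      rw [sub_add_cancel] at h2
      have h3 := htri ε (s • u)
      rw [← hq] at h3
      linarith
    have hN := hcount p hpn
    set S : Set (Fin N) := {i | ∀ j, εs i j ∈ Set.Ico (ρ * p j) (ρ * p j + ρ)} with hS
    classical
    have hSQ : ∀ i ∈ S, u ∈ Q i := by
      intro i hi j _
      have hf : P i j = ρ * p j := by
        show ρ * (⌊εs i j / ρ⌋ : ℝ) = ρ * p j
        have : ⌊εs i j / ρ⌋ = p j := by
          rw [Int.floor_eq_iff, le_div_iff₀ hρ, div_lt_iff₀ hρ]
          have := hi j
          constructor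
          · linarith [this.1]
          · linarith [this.2]
        rw [this]
      have h1 := hqp j
      have hqj : q j = ε j + s * u j := by simp [hq]
      rw [hqj] at h1
      constructor
      · rw [div_le_iff₀ hspos, hf]; linarith [h1.1]
      · rw [lt_div_iff₀ hspos, hf]; linarith [h1.2]
    have hSw : ∀ i ∈ S, E * Real.exp (-nrm u ^ 2) ≤ w i := by
      intro i hi
      rw [hE, hw, ← Real.exp_add]
      apply Real.exp_le_exp.2
      have h1 := hcube (fun j => ρ * p j) (εs i) q
        (fun j => ⟨(hi j).1, (hi j).2.le⟩) (fun j => ⟨(hqp j).1, (hqp j).2.le⟩)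
      have h2 := htri (εs i - q) (s • u)
      have e : εs i - q + s • u = εs i - ε := by rw [hq]; abel
      rw [e, hhom, abs_of_pos hspos] at h2
      have h3 : nrm (εs i - ε) ≤ ρ * k + s * nrm u := by linarith
      have h4 : nrm (εs i - ε) ^ 2 ≤ (ρ * k + s * nrm u) ^ 2 :=
        pow_le_pow_left₀ (hnn _) h3 2
      have h5 : nrm (εs i - ε) ^ 2 ≤ 2 * (ρ * k) ^ 2 + 2 * (s * nrm u) ^ 2 := by
        nlinarith [sq_nonneg (ρ * k - s * nrm u)]
      have h6 : β * nrm (εs i - ε) ^ 2 ≤ β * (2 * (ρ * k) ^ 2 + 2 * (s * nrm u) ^ 2) :=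
        mul_le_mul_of_nonneg_left h5 (by linarith)
      have h7 : β * (2 * (ρ * k) ^ 2 + 2 * (s * nrm u) ^ 2)
          = 2 * k ^ 2 * β * ρ ^ 2 + (2 * β * s ^ 2) * nrm u ^ 2 := by ring
      rw [h7, hs2] at h6
      show _ ≤ -β * nrm (εs i - ε) ^ 2
      linarith
    have hx : 0 ≤ E * Real.exp (-nrm u ^ 2) := by positivity
    calc (N₀ * E) * Real.exp (-nrm u ^ 2) = N₀ * (E * Real.exp (-nrm u ^ 2)) := by ring
      _ ≤ (S.toFinset.card : ℝ) * (E * Real.exp (-nrm u ^ 2)) := by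
          refine mul_le_mul_of_nonneg_right ?_ hx
          rw [Set.ncard_eq_toFinset_card' S] at hN
          exact_mod_cast hN
      _ = ∑ i ∈ S.toFinset, E * Real.exp (-nrm u ^ 2) := by
          rw [Finset.sum_const, nsmul_eq_mul]
      _ ≤ ∑ i ∈ S.toFinset, (Q i).indicator (fun _ => w i) u := by
          refine Finset.sum_le_sum fun i hi => ?_
          rw [Set.mem_toFinset] at hi
          rw [Set.indicator_of_mem (hSQ i hi)]
          exact hSw i hi
      _ ≤ ∑ i, (Q i).indicator (fun _ => w i) u :=
          Finset.sum_le_sum_of_subset_of_nonneg (Finset.subset_univ _) fun i _ _ =>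
            Set.indicator_nonneg (fun _ _ => hwnn i) u
  have hmain : (N₀ * E) * c' ≤ (ρ / s) ^ d * ∑ i, w i := by
    by_cases hInt : IntegrableOn (fun q => Real.exp (-nrm q ^ 2)) {q : Fin d → ℝ | nrm q < 1}
    · have hgi : Integrable (fun u => ∑ i, (Q i).indicator (fun _ => w i) u) :=
        integrable_finsetSum _ fun i _ => hQi i
      calc (N₀ * E) * c'
          = ∫ u in {q : Fin d → ℝ | nrm q < 1}, (N₀ * E) * Real.exp (-nrm u ^ 2) := by
            rw [hc', integral_const_mul]
        _ ≤ ∫ u in {q : Fin d → ℝ | nrm q < 1}, ∑ i, (Q i).indicator (fun _ => w i) u :=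
            setIntegral_mono_on (hInt.const_mul _) hgi.integrableOn hBm hpt
        _ ≤ ∫ u, ∑ i, (Q i).indicator (fun _ => w i) u :=
            setIntegral_le_integral hgi (Filter.Eventually.of_forall fun u =>
              Finset.sum_nonneg fun i _ => Set.indicator_nonneg (fun _ _ => hwnn i) u)
        _ = (ρ / s) ^ d * ∑ i, w i := by
            rw [integral_finsetSum _ fun i _ => hQi i, Finset.mul_sum]
            exact Finset.sum_congr rfl fun i _ => hQint i
    · rw [hc', integral_undef hInt, mul_zero]
      exact mul_nonneg (by positivity) (Finset.sum_nonneg fun i _ => hwnn i)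
  rw [hpow]
  have hfin : c' * (N₀ : ℝ) / ρ ^ d * E * s ^ d = (s ^ d / ρ ^ d) * ((N₀ * E) * c') := by ring
  rw [hfin]
  calc (s ^ d / ρ ^ d) * ((N₀ * E) * c') ≤ (s ^ d / ρ ^ d) * ((ρ / s) ^ d * ∑ i, w i) :=
        mul_le_mul_of_nonneg_left hmain (by positivity)
    _ = ∑ i, w i := by
        rw [div_pow]
        field_simp
end

section
/- Let A ∈ ℝ^{m×m} and D ∈ ℝ^{n×n} be symmetric matrices with Au·u ≥ λ_A‖u‖² (λ_A > 0) and Dv·v ≥ λ_D‖v‖² (λ_D > 0), let B ∈ ℝ^{n×m}, C ∈ ℝ^{m×n}, and suppose there is 0 ≤ μ < 1 with |(B + Cᵀ)u·v| ≤ μ (Au·u + Dv·v) for all u, v. Then for any f ∈ ℝ^m and g ∈ ℝⁿ there is a unique pair (u*, v*) ∈ ℝ^m × ℝⁿ satisfying A u* + C v* = f and B u* + D v* = g; equivalently, (u*, v*) is the unique Nash equilibrium of the game with costs F(u,v) = ½Au·u + Cv·u − f·u and G(u,v) = ½Dv·v + Bu·v − g·v, i.e. the unique pair with F(u*,v*)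 ≤ F(u,v*) for all u and G(u*,v*) ≤ G(u*,v) for all v. -/
open Matrix

/-- First-order characterization of minimizers of a convex quadratic. -/
theorem quad_min_iff {k : ℕ} (A : Matrix (Fin k) (Fin k) ℝ) (hA : A.IsSymm)
    (hpos : ∀ u : Fin k → ℝ, 0 ≤ A.mulVec u ⬝ᵥ u) (c f p : Fin k → ℝ) :
    A.mulVec p + c = f ↔ ∀ u : Fin k → ℝ,
      (1 / 2) * (A.mulVec p ⬝ᵥ p) + c ⬝ᵥ p - f ⬝ᵥ p ≤
        (1 / 2) * (A.mulVec u ⬝ᵥ u) + c ⬝ᵥ u - f ⬝ᵥ u := by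
  have hsym : ∀ x y : Fin k → ℝ, A.mulVec x ⬝ᵥ y = A.mulVec y ⬝ᵥ x := by
    intro x y
    rw [dotProduct_comm, Matrix.dotProduct_mulVec, ← Matrix.mulVec_transpose, hA.eq]
  constructor
  · intro h u
    subst h
    have h1 := hpos (u - p)
    have h2 := hsym u p
    simp only [Matrix.mulVec_sub, sub_dotProduct, dotProduct_sub, add_dotProduct] at *
    linarith
  · intro h
    obtain ⟨w, hw⟩ : ∃ w, w = f - c - A.mulVec p := ⟨_, rfl⟩
    have hf : f = w + c + A.mulVec p := by rw [hw]; abel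
    have key : ∀ t : ℝ, 0 ≤ (A.mulVec w ⬝ᵥ w / 2) * (t * t) + (-(w ⬝ᵥ w)) * t + 0 := by
      intro t
      have h1 := h (p + t • w)
      have h2 := hsym w p
      rw [hf] at h1
      simp only [Matrix.mulVec_add, Matrix.mulVec_smul, add_dotProduct, dotProduct_add,
        smul_dotProduct, dotProduct_smul, smul_eq_mul, h2] at h1
      linarith
    have h3 := discrim_le_zero key
    unfold discrim at h3
    have h4 : w ⬝ᵥ w = 0 := by
      have : (w ⬝ᵥ w) ^ 2 ≤ 0 := by linarith
      exact pow_eq_zero_iff (two_ne_zero) |>.1 (le_antisymm this (sq_nonneg _))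
    have h5 : w = 0 := dotProduct_self_eq_zero.1 h4
    rw [hf, h5]; abel

/-- **Existence and uniqueness of the Nash equilibrium of the quadratic game.**
Under the coercivity assumptions on `A`, `D` and the smallness assumption on `B + Cᵀ`,
the linear system `Au + Cv = f`, `Bu + Dv = g` has a unique solution `(u*,v*)`, and a
pair solves this system if and only if it is a Nash equilibrium of the game with costs
`F(u,v) = ½Au·u + Cv·u − f·u` and `G(u,v) = ½Dv·v + Bu·v − g·v`. -/
theorem quadratic_game_nash_equilibrium (m n : ℕ)
    (A : Matrix (Fin m) (Fin m) ℝ) (D : Matrix (Fin n) (Fin n) ℝ)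
    (hA : A.IsSymm) (hD : D.IsSymm)
    (B : Matrix (Fin n) (Fin m) ℝ) (C : Matrix (Fin m) (Fin n) ℝ)
    (lamA lamD : ℝ) (hlamA : 0 < lamA) (hlamD : 0 < lamD)
    (hAc : ∀ u : Fin m → ℝ, lamA * (u ⬝ᵥ u) ≤ A.mulVec u ⬝ᵥ u)
    (hDc : ∀ v : Fin n → ℝ, lamD * (v ⬝ᵥ v) ≤ D.mulVec v ⬝ᵥ v)
    (μ : ℝ) (hμ0 : 0 ≤ μ) (hμ1 : μ < 1)
    (hcross : ∀ (u : Fin m → ℝ) (v : Fin n → ℝ),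
      |(B + Cᵀ).mulVec u ⬝ᵥ v| ≤ μ * (A.mulVec u ⬝ᵥ u + D.mulVec v ⬝ᵥ v))
    (f : Fin m → ℝ) (g : Fin n → ℝ) :
    (∃! p : (Fin m → ℝ) × (Fin n → ℝ),
        A.mulVec p.1 + C.mulVec p.2 = f ∧ B.mulVec p.1 + D.mulVec p.2 = g) ∧
    (∀ p : (Fin m → ℝ) × (Fin n → ℝ),
        (A.mulVec p.1 + C.mulVec p.2 = f ∧ B.mulVec p.1 + D.mulVec p.2 = g) ↔
        ((∀ u : Fin m → ℝ,
            (1 / 2) * (A.mulVec p.1 ⬝ᵥ p.1) + C.mulVec p.2 ⬝ᵥ p.1 - f ⬝ᵥ p.1 ≤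
              (1 / 2) * (A.mulVec u ⬝ᵥ u) + C.mulVec p.2 ⬝ᵥ u - f ⬝ᵥ u) ∧
         (∀ v : Fin n → ℝ,
            (1 / 2) * (D.mulVec p.2 ⬝ᵥ p.2) + B.mulVec p.1 ⬝ᵥ p.2 - g ⬝ᵥ p.2 ≤
              (1 / 2) * (D.mulVec v ⬝ᵥ v) + B.mulVec p.1 ⬝ᵥ v - g ⬝ᵥ v))) := by
  have nn : ∀ {k : ℕ} (u : Fin k → ℝ), 0 ≤ u ⬝ᵥ u := fun u =>
    Finset.sum_nonneg fun i _ => mul_self_nonneg (u i)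
  have hA0 : ∀ u : Fin m → ℝ, 0 ≤ A.mulVec u ⬝ᵥ u := fun u =>
    (mul_nonneg hlamA.le (nn u)).trans (hAc u)
  have hD0 : ∀ u : Fin n → ℝ, 0 ≤ D.mulVec u ⬝ᵥ u := fun u =>
    (mul_nonneg hlamD.le (nn u)).trans (hDc u)
  refine ⟨?_, ?_⟩
  · let L : ((Fin m → ℝ) × (Fin n → ℝ)) →ₗ[ℝ] ((Fin m → ℝ) × (Fin n → ℝ)) :=
      (A.mulVecLin.coprod C.mulVecLin).prod (B.mulVecLin.coprod D.mulVecLin)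
    have hL : ∀ p, L p = (A.mulVec p.1 + C.mulVec p.2, B.mulVec p.1 + D.mulVec p.2) :=
      fun p => rfl
    have hinj : Function.Injective L := by
      rw [injective_iff_map_eq_zero]
      rintro ⟨u, v⟩ h
      rw [hL, Prod.mk_eq_zero] at h
      obtain ⟨h1, h2⟩ := h
      dsimp only at h1 h2
      have e1 : A.mulVec u ⬝ᵥ u + C.mulVec v ⬝ᵥ u = 0 := by
        rw [← add_dotProduct, h1, zero_dotProduct]
      have e2 : B.mulVec u ⬝ᵥ v + D.mulVec v ⬝ᵥ v = 0 := by
        rw [← add_dotProduct, h2, zero_dotProduct]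
      have e3 : (B + Cᵀ).mulVec u ⬝ᵥ v = B.mulVec u ⬝ᵥ v + C.mulVec v ⬝ᵥ u := by
        rw [Matrix.add_mulVec, add_dotProduct, Matrix.mulVec_transpose,
          ← Matrix.dotProduct_mulVec, dotProduct_comm u]
      have h4 := (abs_le.1 (hcross u v)).1
      have a0 := hA0 u
      have d0 := hD0 v
      have s0 : A.mulVec u ⬝ᵥ u + D.mulVec v ⬝ᵥ v ≤ 0 := by
        by_contra hc
        push Not at hc
        nlinarith
      have hu : u ⬝ᵥ u = 0 := by
        have := hAc u
        have := nn u
        nlinarith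
      have hv : v ⬝ᵥ v = 0 := by
        have := hDc v
        have := nn v
        nlinarith
      rw [dotProduct_self_eq_zero.1 hu, dotProduct_self_eq_zero.1 hv]
      rfl
    obtain ⟨p, hp⟩ := LinearMap.injective_iff_surjective.1 hinj (f, g)
    refine ⟨p, ?_, ?_⟩
    · rw [hL, Prod.mk.injEq] at hp
      exact hp
    · intro q hq
      apply hinj
      rw [hp, hL, Prod.mk.injEq]
      exact hq
  · intro p
    rw [quad_min_iff A hA hA0, add_comm (B.mulVec p.1), quad_min_iff D hD hD0]
end

section
/- Let (ε_i, σ_i) ∈ ℝᵈ × ℝᵈ for i = 1,…,N, let ℂ ∈ ℝ^{d×d} be symmetric positive definite, β > 0, and define the Gibbs weights p*_i(ε) = e^{−β ℂ(ε_i−ε)·(ε_i−ε)} / Σ_{j=1}^N e^{−β ℂ(ε_j−ε)·(ε_j−ε)} and the effective material law σ̂(ε) = Σ_{i=1}^N p*_i(ε) σ_i. Then σ̂ is differentiable on ℝᵈ and its derivative is given by Dσ̂(ε)[h] = 2β Σ_{j=1}^N p*_j(ε) (ℂ(ε_j − ε̄(ε))·h) σ_j for all h ∈ ℝᵈ, where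 ε̄(ε) = Σ_{i=1}^N p*_i(ε) ε_i; equivalently, Dσ̂(ε) = Σ_j 2β p*_j(ε) σ_j ⊗ (ℂ(ε_j − ε̄(ε))). -/
open Matrix


lemma quad_hasFDerivAt {d : ℕ} (C : Matrix (Fin d) (Fin d) ℝ) (hC : C.IsSymm)
    (x ε : Fin d → ℝ) :
    ∃ L : (Fin d → ℝ) →L[ℝ] ℝ,
      HasFDerivAt (fun ε : Fin d → ℝ => C.mulVec (x - ε) ⬝ᵥ (x - ε)) L ε ∧
      ∀ h, L h = -2 * (C.mulVec (x - ε) ⬝ᵥ h) := by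
  have h1 : ∀ k, HasFDerivAt (fun ε : Fin d → ℝ => x k - ε k)
      (-(ContinuousLinearMap.proj k : (Fin d → ℝ) →L[ℝ] ℝ)) ε := fun k =>
    ((ContinuousLinearMap.proj k : (Fin d → ℝ) →L[ℝ] ℝ).hasFDerivAt).const_sub (x k)
  have h2 : ∀ k, HasFDerivAt (fun ε : Fin d → ℝ => ∑ l, C k l * (x l - ε l))
      (∑ l, C k l • (-(ContinuousLinearMap.proj l : (Fin d → ℝ) →L[ℝ] ℝ))) ε := fun k =>
    HasFDerivAt.fun_sum fun l _ => (h1 l).const_mul (C k l)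
  have h3 := HasFDerivAt.fun_sum (u := Finset.univ) fun k _ => (h2 k).mul (h1 k)
  refine ⟨_, h3, fun h => ?_⟩
  have e1 : C.mulVec (x - ε) ⬝ᵥ h = C.mulVec h ⬝ᵥ (x - ε) := by
    rw [dotProduct_comm, Matrix.dotProduct_mulVec, ← Matrix.mulVec_transpose, hC.eq]
  have e2 : -2 * (C.mulVec (x - ε) ⬝ᵥ h)
      = -(C.mulVec (x - ε) ⬝ᵥ h) - (C.mulVec h ⬝ᵥ (x - ε)) := by rw [← e1]; ring
  rw [e2]
  simp only [Matrix.mulVec, dotProduct, Pi.sub_apply, _root_.sum_apply,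
    _root_.add_apply, _root_.smul_apply, _root_.neg_apply,
    ContinuousLinearMap.proj_apply, smul_eq_mul]
  rw [← Finset.sum_neg_distrib, ← Finset.sum_sub_distrib]
  refine Finset.sum_congr rfl fun k _ => ?_
  simp only [mul_neg, Finset.sum_neg_distrib]
  ring

/-- **Material tangent of the regularized effective law.** For Gibbs weights
`p*_i(ε) = e^{−β‖ε_i−ε‖_ℂ²}/Σ_j e^{−β‖ε_j−ε‖_ℂ²}` (with `‖x‖_ℂ² = ℂx·x`, `ℂ` symmetric
positive definite) and `σ̂(ε) = Σ_i p*_i(ε) σ_i`, the map `σ̂` is differentiable and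
`Dσ̂(ε)[h] = 2β Σ_j p*_j(ε) (ℂ(ε_j − ε̄(ε))·h) σ_j`, where `ε̄(ε) = Σ_i p*_i(ε) ε_i`. -/
theorem effective_law_tangent (d N : ℕ)
    (εs σs : Fin N → Fin d → ℝ)
    (C : Matrix (Fin d) (Fin d) ℝ) (hC : C.PosDef)
    (β : ℝ) (hβ : 0 < β)
    (p : (Fin d → ℝ) → Fin N → ℝ)
    (hp : ∀ ε i, p ε i =
      Real.exp (-β * (C.mulVec (εs i - ε) ⬝ᵥ (εs i - ε))) /
        ∑ j, Real.exp (-β * (C.mulVec (εs j - ε) ⬝ᵥ (εs j - ε))))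
    (σhat : (Fin d → ℝ) → Fin d → ℝ)
    (hσhat : ∀ ε, σhat ε = ∑ i, p ε i • σs i) :
    Differentiable ℝ σhat ∧
    ∀ (ε h : Fin d → ℝ),
      fderiv ℝ σhat ε h =
        ∑ j, (2 * β * p ε j * (C.mulVec (εs j - ∑ i, p ε i • εs i) ⬝ᵥ h)) • σs j := by
  have hsymm : C.IsSymm := by
    have := hC.isHermitian
    simpa [Matrix.IsHermitian, Matrix.IsSymm, Matrix.conjTranspose_eq_transpose_of_trivial] using this
  have key : ∀ ε : Fin d → ℝ, ∃ L : (Fin d → ℝ) →L[ℝ] (Fin d → ℝ),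
      HasFDerivAt σhat L ε ∧ ∀ h, L h =
        ∑ j, (2 * β * p ε j * (C.mulVec (εs j - ∑ i, p ε i • εs i) ⬝ᵥ h)) • σs j := by
    intro ε
    choose Q hQ hQh using fun i => quad_hasFDerivAt C hsymm (εs i) ε
    have hf := fun i => ((hQ i).const_mul (-β)).exp
    have hZ := HasFDerivAt.fun_sum (u := Finset.univ) fun i _ => hf i
    have hpi : ∀ i, ∃ P : (Fin d → ℝ) →L[ℝ] ℝ, HasFDerivAt (fun ε => p ε i) P ε ∧
        ∀ h, P h = 2 * β * p ε i * (C.mulVec (εs i - ∑ i, p ε i • εs i) ⬝ᵥ h) := by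
      intro i
      have hZ0 : (∑ j, Real.exp (-β * (C.mulVec (εs j - ε) ⬝ᵥ (εs j - ε)))) ≠ 0 :=
        (Finset.sum_pos (fun j _ => Real.exp_pos _) ⟨i, Finset.mem_univ i⟩).ne'
      have hd := (hf i).mul ((hasDerivAt_inv hZ0).comp_hasFDerivAt ε hZ)
      have hd2 := hd.congr_of_eventuallyEq (f₁ := fun ε => p ε i)
        (Filter.Eventually.of_forall fun e => by simp [hp, div_eq_mul_inv])
      refine ⟨_, hd2, fun h => ?_⟩
      have hsum : ∑ j, p ε j = 1 := by
        simp only [hp]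
        rw [← Finset.sum_div, div_self hZ0]
      have hbar : C.mulVec (εs i - ∑ j, p ε j • εs j) ⬝ᵥ h
          = C.mulVec (εs i - ε) ⬝ᵥ h - ∑ j, p ε j * (C.mulVec (εs j - ε) ⬝ᵥ h) := by
        have e : εs i - ∑ j, p ε j • εs j = (εs i - ε) - ∑ j, p ε j • (εs j - ε) := by
          simp only [smul_sub, Finset.sum_sub_distrib, ← Finset.sum_smul, hsum, one_smul]
          abel
        rw [e, Matrix.mulVec_sub, sub_dotProduct, Matrix.mulVec_sum, sum_dotProduct]
        simp only [Matrix.mulVec_smul, smul_dotProduct, smul_eq_mul]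
      rw [hbar]
      have hfe : ∀ j, Real.exp (-β * (C.mulVec (εs j - ε) ⬝ᵥ (εs j - ε)))
          = p ε j * ∑ j, Real.exp (-β * (C.mulVec (εs j - ε) ⬝ᵥ (εs j - ε))) := by
        intro j
        rw [hp, div_mul_cancel₀ _ hZ0]
      simp only [Function.comp_apply]
      generalize (∑ j, Real.exp (-β * (C.mulVec (εs j - ε) ⬝ᵥ (εs j - ε)))) = Z at hZ0 hfe ⊢
      simp only [hfe, _root_.sum_apply, _root_.add_apply,
        _root_.smul_apply, smul_eq_mul, hQh]
      have e3 : ∑ j, p ε j * Z * (-β * (-2 * (C.mulVec (εs j - ε) ⬝ᵥ h)))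
          = 2 * β * Z * ∑ j, p ε j * (C.mulVec (εs j - ε) ⬝ᵥ h) := by
        rw [Finset.mul_sum]
        exact Finset.sum_congr rfl fun j _ => by ring
      rw [e3]
      field_simp
      ring
    choose P hP hPh using hpi
    have hs := HasFDerivAt.fun_sum (u := Finset.univ) fun i _ => (hP i).smul_const (σs i)
    refine ⟨_, hs.congr_of_eventuallyEq (Filter.Eventually.of_forall hσhat), fun h => ?_⟩
    simp [hPh]
  refine ⟨fun ε => ?_, fun ε h => ?_⟩
  · obtain ⟨L, hL, -⟩ := key ε
    exact hL.differentiableAt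
  · obtain ⟨L, hL, hh⟩ := key ε
    rw [hL.fderiv, hh]
end
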